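/- arXiv:2512.21565 — 10 statements merged into one kernel-verified Lean document; each statement's English description precedes it below -/
import Mathlib

section
/- Let n ≥ 2 and let Z be a proper closed subset of ℝⁿ that is unbounded in all rational directions. Then the congruence E(Z) on the semiring 𝕋[x₁^±,…,xₙ^±]_fcn of tropical Laurent polynomial functions is not finitely generated, i.e., there is no finite set S ⊆ 𝕋[x₁^±,…,xₙ^±]_fcn × 𝕋[x₁^±,…,xₙ^±]_fcn with E(Z) = ⟨S⟩. -/
/-!
Let `S` be a finite set of pairs generating `𝐄(Z)`, and let `p₀ ∉ Z`.

The idea is to find a polynomial function `f` whose class under `⟨S⟩` is `{f}`, although some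
`g ≠ f` agrees with `f` on `Z`. The class of `f` is a singleton as soon as replacing `s` by `t`
in an expression `f = a ⊙ s ⊕ b` with `(s, t)` or `(t, s)` in `S` never changes the value; this is
phrased as `S ⊆ syntacticCong f`.

Take the lattice simplex with vertices `e₁, …, eₙ, -(e₁ + ⋯ + eₙ)`, whose only other lattice point
is `0`, and a matrix `A ∈ GLₙ(ℤ)` such that the images of these `n + 2` points differ pairwise by
vectors larger than any difference of exponents in `S`; such an `A` exists since `n ≥ 2`
(`exists_spreading`). Let `f` be the maximum of the linear forms given by the images of the vertices,
centred at `p₀`. If `f = a ⊙ s ⊕ b` with `a ≠ -∞`, then every exponent of `a ⊙ s` is a lattice point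
of the image simplex (`exponent_mem`), so two exponents of `s` cannot differ and `s` is a monomial
or `-∞`. Since `Z` is unbounded in all rational directions, `t = s` on `Z` then forces `t = s`
(`eq_of_monomial`). Hence the class of `f` is `{f}`.

On the other hand `f` vanishes at `p₀` and is at least some `ε > 0` on the closed set `Z`
(`simplexFn_large`), so `g = f ⊕ ε` agrees with `f` on `Z` but not at `p₀`.
-/


noncomputable section

/-- The tropical semifield `𝕋 = ℝ ∪ {-∞}`, with tropical addition `⊔` (max) and
tropical multiplication `+`. -/
abbrev Trop : Type := WithBot ℝ

/-- `𝕋`-valued functions on `ℝⁿ`. -/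
abbrev TropFn (n : ℕ) : Type := (Fin n → ℝ) → Trop

/-- `f` is a tropical Laurent polynomial function: it is the pointwise maximum of finitely
many affine terms `p ↦ c + u·p` with `c ∈ ℝ` and `u ∈ ℤⁿ` (terms with coefficient `-∞` are
ignored, so we may take all coefficients real; the empty maximum is the constant `-∞`). -/
def IsTropFcn {n : ℕ} (f : TropFn n) : Prop :=
  ∃ A : Finset (ℝ × (Fin n → ℤ)),
    ∀ p, f p = A.sup fun t => ((t.1 + ∑ i, (t.2 i : ℝ) * p i : ℝ) : Trop)

/-- A congruence on the semiring `𝕋[x₁^±,…,xₙ^±]_fcn` of tropical Laurent polynomial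
functions: an equivalence relation on the set of tropical Laurent polynomial functions that
is compatible with the semiring addition (pointwise `⊔`) and multiplication (pointwise `+`). -/
structure IsTropCongruence (n : ℕ) (E : Set (TropFn n × TropFn n)) : Prop where
  mem_left : ∀ ⦃f g : TropFn n⦄, (f, g) ∈ E → IsTropFcn f
  mem_right : ∀ ⦃f g : TropFn n⦄, (f, g) ∈ E → IsTropFcn g
  refl : ∀ ⦃f : TropFn n⦄, IsTropFcn f → (f, f) ∈ E
  symm : ∀ ⦃f g : TropFn n⦄, (f, g) ∈ E → (g, f) ∈ E
  trans : ∀ ⦃f g h : TropFn n⦄, (f, g) ∈ E → (g, h) ∈ E → (f, h) ∈ E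
  add_compat : ∀ ⦃f₁ g₁ f₂ g₂ : TropFn n⦄,
    (f₁, g₁) ∈ E → (f₂, g₂) ∈ E → (f₁ ⊔ f₂, g₁ ⊔ g₂) ∈ E
  mul_compat : ∀ ⦃f₁ g₁ f₂ g₂ : TropFn n⦄,
    (f₁, g₁) ∈ E → (f₂, g₂) ∈ E → (f₁ + f₂, g₁ + g₂) ∈ E

/-- `⟨S⟩`: the smallest congruence containing `S`. -/
def congGen (n : ℕ) (S : Set (TropFn n × TropFn n)) : Set (TropFn n × TropFn n) :=
  ⋂₀ {E | IsTropCongruence n E ∧ S ⊆ E}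

/-- `𝐄(Z)`: the congruence of pairs of tropical Laurent polynomial functions agreeing on `Z`. -/
def Econg (n : ℕ) (Z : Set (Fin n → ℝ)) : Set (TropFn n × TropFn n) :=
  {fg | IsTropFcn fg.1 ∧ IsTropFcn fg.2 ∧ ∀ p ∈ Z, fg.1 p = fg.2 p}

/-- `Z ⊆ ℝⁿ` is unbounded in all rational directions: for every `u ∈ ℤⁿ \ {0}` the set
`{p·u : p ∈ Z}` is unbounded above. -/
def UnbddAllRatDirs {n : ℕ} (Z : Set (Fin n → ℝ)) : Prop :=
  ∀ u : Fin n → ℤ, u ≠ 0 → ¬ BddAbove ((fun p => ∑ i, (u i : ℝ) * p i) '' Z)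

open Matrix Finset

/-- The pairing `w·p` of an integer exponent vector with a real point. -/
def ldot {n : ℕ} (w : Fin n → ℤ) (p : Fin n → ℝ) : ℝ := ∑ i, (w i : ℝ) * p i

lemma ldot_eq {n : ℕ} (w : Fin n → ℤ) (p : Fin n → ℝ) :
    ldot w p = (fun i => (w i : ℝ)) ⬝ᵥ p := rfl

lemma ldot_add_left {n : ℕ} (v w : Fin n → ℤ) (p : Fin n → ℝ) :
    ldot (v + w) p = ldot v p + ldot w p := by
  simp [ldot, add_mul, Finset.sum_add_distrib]

lemma ldot_sub_left {n : ℕ} (v w : Fin n → ℤ) (p : Fin n → ℝ) :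
    ldot (v - w) p = ldot v p - ldot w p := by
  simp [ldot, sub_mul, Finset.sum_sub_distrib]

lemma ldot_add_right {n : ℕ} (w : Fin n → ℤ) (p q : Fin n → ℝ) :
    ldot w (p + q) = ldot w p + ldot w q := by
  simp [ldot, mul_add, Finset.sum_add_distrib]

lemma ldot_sub_right {n : ℕ} (w : Fin n → ℤ) (p q : Fin n → ℝ) :
    ldot w (p - q) = ldot w p - ldot w q := by
  simp [ldot, mul_sub, Finset.sum_sub_distrib]

lemma ldot_smul_right {n : ℕ} (w : Fin n → ℤ) (t : ℝ) (p : Fin n → ℝ) :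
    ldot w (t • p) = t * ldot w p := by
  simp [ldot, Finset.mul_sum, mul_left_comm]

/-- The set of terms `A` represents the function `f`. -/
def Represents {n : ℕ} (A : Finset (ℝ × (Fin n → ℤ))) (f : TropFn n) : Prop :=
  ∀ p, f p = A.sup fun t => ((t.1 + ldot t.2 p : ℝ) : Trop)

/-! ### The semiring of tropical polynomial functions -/

lemma IsTropFcn.sup {n : ℕ} {f g : TropFn n} (hf : IsTropFcn f) (hg : IsTropFcn g) :
    IsTropFcn (f ⊔ g) := by
  classical
  obtain ⟨A, hA⟩ := hf
  obtain ⟨B, hB⟩ := hg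
  refine ⟨A ∪ B, fun p => ?_⟩
  rw [Finset.sup_union, Pi.sup_apply, hA, hB]

lemma trop_add_sup (a b c : Trop) : a + (b ⊔ c) = (a + b) ⊔ (a + c) := by
  rcases le_total b c with h | h
  · rw [sup_eq_right.2 h, sup_eq_right.2 (by gcongr)]
  · rw [sup_eq_left.2 h, sup_eq_left.2 (by gcongr)]

lemma trop_add_finset_sup {α : Type*} (a : Trop) (A : Finset α) (f : α → Trop) :
    a + A.sup f = A.sup fun t => a + f t := by
  classical
  induction A using Finset.induction_on with
  | empty => simp
  | insert x A hx ih => rw [Finset.sup_insert, Finset.sup_insert, trop_add_sup, ih]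

lemma IsTropFcn.add {n : ℕ} {f g : TropFn n} (hf : IsTropFcn f) (hg : IsTropFcn g) :
    IsTropFcn (f + g) := by
  classical
  obtain ⟨A, hA⟩ := hf
  obtain ⟨B, hB⟩ := hg
  refine ⟨(A ×ˢ B).image fun x => (x.1.1 + x.2.1, x.1.2 + x.2.2), fun p => ?_⟩
  rw [Pi.add_apply, hA, hB, Finset.sup_image, Finset.sup_product_left, trop_add_finset_sup,
    Finset.sup_comm]
  refine Finset.sup_congr rfl fun b _ => ?_
  rw [add_comm, trop_add_finset_sup]
  refine Finset.sup_congr rfl fun a _ => ?_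
  have h := ldot_add_left a.2 b.2 p
  simp only [ldot] at h
  simp only [Function.comp]
  rw [h, ← WithBot.coe_add]
  congr 1
  ring

lemma isTropFcn_bot {n : ℕ} : IsTropFcn (⊥ : TropFn n) := ⟨∅, fun p => by simp⟩

lemma isTropFcn_const {n : ℕ} (c : ℝ) : IsTropFcn (fun _ => (c : Trop) : TropFn n) :=
  ⟨{(c, 0)}, fun p => by simp⟩

/-- The syntactic congruence of `{f}`, i.e. the coarsest congruence for which the class of `f`
is `{f}`. -/
def syntacticCong {n : ℕ} (f : TropFn n) : Set (TropFn n × TropFn n) :=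
  {hk | IsTropFcn hk.1 ∧ IsTropFcn hk.2 ∧ ∀ a b : TropFn n, IsTropFcn a → IsTropFcn b →
    ((a + hk.1) ⊔ b = f ↔ (a + hk.2) ⊔ b = f)}

lemma fn_add_sup {n : ℕ} (a b c : TropFn n) : a + (b ⊔ c) = (a + b) ⊔ (a + c) :=
  funext fun p => trop_add_sup (a p) (b p) (c p)

lemma syntacticCong_isTropCongruence {n : ℕ} (f : TropFn n) :
    IsTropCongruence n (syntacticCong f) where
  mem_left _ _ h := h.1
  mem_right _ _ h := h.2.1
  refl _ h := ⟨h, h, fun _ _ _ _ => Iff.rfl⟩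
  symm _ _ h := ⟨h.2.1, h.1, fun a b ha hb => (h.2.2 a b ha hb).symm⟩
  trans _ _ _ h k := ⟨h.1, k.2.1, fun a b ha hb => (h.2.2 a b ha hb).trans (k.2.2 a b ha hb)⟩
  add_compat f₁ g₁ f₂ g₂ h k := by
    obtain ⟨hf₁, hg₁, h⟩ := h
    obtain ⟨hf₂, hg₂, k⟩ := k
    dsimp only at *
    refine ⟨hf₁.sup hf₂, hg₁.sup hg₂, fun a b ha hb => ?_⟩
    dsimp only
    have h1 := h a ((a + f₂) ⊔ b) ha ((ha.add hf₂).sup hb)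
    have h2 := k a ((a + g₁) ⊔ b) ha ((ha.add hg₁).sup hb)
    rw [fn_add_sup, fn_add_sup, sup_assoc, h1, sup_left_comm, h2, sup_left_comm, sup_assoc]
  mul_compat f₁ g₁ f₂ g₂ h k := by
    obtain ⟨hf₁, hg₁, h⟩ := h
    obtain ⟨hf₂, hg₂, k⟩ := k
    dsimp only at *
    refine ⟨hf₁.add hf₂, hg₁.add hg₂, fun a b ha hb => ?_⟩
    dsimp only
    have h1 := h (a + f₂) b (ha.add hf₂) hb
    have h2 := k (a + g₁) b (ha.add hg₁) hb
    rw [add_comm f₁, ← add_assoc, h1, add_right_comm, h2, add_assoc]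

/-! ### Functions that are equal on `Z` to a monomial -/

/-- A monomial is the only tropical polynomial function with its restriction to `Z`. -/
lemma eq_of_monomial {n : ℕ} (hn : 2 ≤ n) {Z : Set (Fin n → ℝ)} (hZ : UnbddAllRatDirs Z)
    {s t : TropFn n} {A : Finset (ℝ × (Fin n → ℤ))} (hA : Represents A s)
    (hmono : ∀ x ∈ A, ∀ y ∈ A, x.2 = y.2) (ht : IsTropFcn t) (hst : ∀ p ∈ Z, s p = t p) :
    t = s := by
  have hZne : Z.Nonempty := by
    rw [Set.nonempty_iff_ne_empty]
    rintro rfl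
    refine hZ (fun _ => 1) (fun h => ?_) (by simp)
    simpa using congrFun h ⟨0, by omega⟩
  obtain ⟨z, hz⟩ := hZne
  obtain ⟨B, hB⟩ := ht
  replace hB : Represents B t := hB
  have hzz := hst z hz
  rcases A.eq_empty_or_nonempty with rfl | ⟨x₀, hx₀⟩
  · have hBe : B = ∅ := by
      by_contra hne
      obtain ⟨y, hy⟩ := Finset.nonempty_iff_ne_empty.2 hne
      have h1 : ((y.1 + ldot y.2 z : ℝ) : Trop) ≤ t z := by
        rw [hB]
        exact Finset.le_sup (f := fun t => ((t.1 + ldot t.2 z : ℝ) : Trop)) hy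
      rw [← hzz, hA] at h1
      simp at h1
    funext p
    rw [hA, hB, hBe]
  -- a function all of whose terms have exponent `v` is a constant plus the monomial `v`
  have key : ∀ (v : Fin n → ℤ) (C : Finset (ℝ × (Fin n → ℤ))) (h : TropFn n),
      Represents C h → (∀ y ∈ C, y.2 = v) → ∀ p, h p = (ldot v p : Trop) +
        C.sup fun y => (y.1 : Trop) := by
    intro v C h hC hv p
    rw [hC, trop_add_finset_sup]
    refine Finset.sup_congr rfl fun y hy => ?_
    rw [hv y hy, ← WithBot.coe_add, add_comm]
  have hsv := key x₀.2 A s hA (fun y hy => hmono y hy x₀ hx₀)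
  obtain ⟨c, hc⟩ : ∃ c : ℝ, (A.sup fun y => (y.1 : Trop)) = (c : Trop) := by
    have : (A.sup fun y => (y.1 : Trop)) ≠ ⊥ := by
      intro h
      have := Finset.le_sup (f := fun y : ℝ × (Fin n → ℤ) => (y.1 : Trop)) hx₀
      rw [h] at this
      simp at this
    exact ⟨_, (WithBot.coe_unbot _ this).symm⟩
  have htv : ∀ y ∈ B, y.2 = x₀.2 := by
    intro y hy
    by_contra hne
    apply hZ (y.2 - x₀.2) (sub_ne_zero.2 hne)
    refine ⟨c - y.1, ?_⟩
    rintro _ ⟨p, hp, rfl⟩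
    change ldot (y.2 - x₀.2) p ≤ _
    have h1 : ((y.1 + ldot y.2 p : ℝ) : Trop) ≤ t p := by
      rw [hB]
      exact Finset.le_sup (f := fun t => ((t.1 + ldot t.2 p : ℝ) : Trop)) hy
    rw [← hst p hp, hsv, hc, ← WithBot.coe_add, WithBot.coe_le_coe] at h1
    rw [ldot_sub_left]
    linarith
  have htv := key x₀.2 B t hB htv
  rw [hsv, htv] at hzz
  have := WithBot.add_left_cancel (WithBot.coe_ne_bot) hzz
  funext p
  rw [hsv, htv, this]

/-! ### The simplex and its unimodular images -/

/-- The vertices `e₁, …, eₙ, -(e₁ + ⋯ + eₙ)` of a simplex in which `0` is the only other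
lattice point. -/
def simplexVerts (n : ℕ) : Finset (Fin n → ℤ) :=
  insert (fun _ => -1) (univ.image fun i => Pi.single i 1)

lemma mem_simplexVerts {n : ℕ} {x : Fin n → ℤ} :
    x ∈ simplexVerts n ↔ x = (fun _ => -1) ∨ ∃ i, Pi.single i 1 = x := by
  simp [simplexVerts]

/-- A lattice point satisfying the facet inequalities of the simplex is `0` or a vertex. -/
lemma simplex_lattice {n : ℕ} (x : Fin n → ℤ) (h1 : ∑ i, x i ≤ 1)
    (h2 : ∀ i, ∑ j, x j - (n + 1) * x i ≤ 1) : x ∈ insert 0 (simplexVerts n) := by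
  rw [Finset.mem_insert, mem_simplexVerts]
  set s := ∑ i, x i with hs
  have hsn : -(n : ℤ) ≤ s := by
    have := Finset.sum_le_sum fun i (_ : i ∈ univ) => h2 i
    simp only [Finset.sum_sub_distrib, ← Finset.mul_sum, ← hs, Finset.sum_const, card_univ,
      Fintype.card_fin, nsmul_eq_mul] at this
    linarith
  rcases hsn.eq_or_lt with hsn | hsn
  · -- `s = -n` forces every coordinate to be `-1`
    right; left
    have hge : ∀ i ∈ univ, (-1 : ℤ) ≤ x i := fun i _ => by
      have := h2 i
      rw [← hsn] at this
      by_contra! h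
      nlinarith [show x i ≤ -2 by omega]
    have heq : ∑ _i : Fin n, (-1 : ℤ) = ∑ i, x i := by
      rw [← hs, ← hsn]; simp
    funext i
    exact ((Finset.sum_eq_sum_iff_of_le hge).1 heq i (mem_univ i)).symm
  have hge : ∀ i ∈ univ, 0 ≤ x i := fun i _ => by
    have := h2 i
    by_contra! h
    nlinarith [show x i ≤ -1 by omega]
  have hs0 : 0 ≤ s := Finset.sum_nonneg hge
  rcases hs0.eq_or_lt with hs0 | hs0
  · left
    funext i
    exact (Finset.sum_eq_zero_iff_of_nonneg hge).1 (hs ▸ hs0.symm) i (mem_univ i)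
  · right; right
    have hs1 : s = 1 := by omega
    obtain ⟨i, hi⟩ : ∃ i, x i ≠ 0 := by
      by_contra! h
      simp [h] at hs
      omega
    refine ⟨i, ?_⟩
    have hsplit := Finset.add_sum_erase univ x (mem_univ i)
    have hge' : ∀ j ∈ univ.erase i, 0 ≤ x j := fun j _ => hge j (mem_univ j)
    have h0 := Finset.sum_nonneg hge'
    have hxi := hge i (mem_univ i)
    have hz := (Finset.sum_eq_zero_iff_of_nonneg hge').1 (by omega)
    funext j
    rcases eq_or_ne j i with rfl | hj
    · rw [Pi.single_eq_same]; omega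
    · rw [Pi.single_eq_of_ne hj, hz j (by simp [hj])]

lemma shear_mul {n : ℕ} (a b : Fin n → ℤ) (h : b ⬝ᵥ a = 0) :
    (1 + vecMulVec a b) * (1 - vecMulVec a b) = 1 := by
  have : vecMulVec a b * vecMulVec a b = 0 := by
    rw [vecMulVec_mul_vecMulVec, h]; simp
  rw [mul_sub, add_mul, add_mul, this]; simp

/-- A unimodular matrix under which distinct lattice points of the simplex become arbitrarily far
apart; this is where `n ≥ 2` enters.  With `L x = ∑ (j+1) xⱼ`, which is injective
on the lattice points of the simplex, it replaces `x₀` by `L x` and `x₁` by `x₁ + M * L x`, for a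
large constant `M`. -/
lemma exists_spreading {n : ℕ} (hn : 2 ≤ n) (K : ℕ) : ∃ A B : Matrix (Fin n) (Fin n) ℤ,
    A * B = 1 ∧ B * A = 1 ∧ ∀ x ∈ insert 0 (simplexVerts n), ∀ y ∈ insert 0 (simplexVerts n),
      x ≠ y → ∃ i, (K : ℤ) < |(A *ᵥ x) i - (A *ᵥ y) i| := by
  obtain ⟨m, rfl⟩ := Nat.exists_eq_add_of_le' hn
  let M : ℤ := K + 3
  let a₁ : Fin (m + 2) → ℤ := Pi.single 0 1
  let b₁ : Fin (m + 2) → ℤ := fun j => if j = 0 then 0 else (j : ℤ) + 1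
  let a₂ : Fin (m + 2) → ℤ := Pi.single 1 M
  let b₂ : Fin (m + 2) → ℤ := Pi.single 0 1
  let L : (Fin (m + 2) → ℤ) → ℤ := fun x => ∑ j : Fin (m + 2), ((j : ℤ) + 1) * x j
  have e₁ : b₁ ⬝ᵥ a₁ = 0 := by simp [a₁, b₁]
  have e₂ : b₂ ⬝ᵥ a₂ = 0 := by simp [a₂, b₂]
  have hAB : ((1 + vecMulVec a₂ b₂) * (1 + vecMulVec a₁ b₁)) *
      ((1 - vecMulVec a₁ b₁) * (1 - vecMulVec a₂ b₂)) = 1 := by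
    rw [mul_assoc, ← mul_assoc (1 + vecMulVec a₁ b₁), shear_mul _ _ e₁, one_mul, shear_mul _ _ e₂]
  refine ⟨_, _, hAB, mul_eq_one_comm.1 hAB, ?_⟩
  have hL0 : ∀ x : Fin (m + 2) → ℤ, x 0 + b₁ ⬝ᵥ x = L x := by
    intro x
    simp only [L, b₁, dotProduct, Fin.sum_univ_succ (n := m + 1)]
    simp [Fin.succ_ne_zero]
  have hA1 : ∀ x, (((1 + vecMulVec a₂ b₂) * (1 + vecMulVec a₁ b₁)) *ᵥ x) 1 = x 1 + M * L x := by
    intro x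
    rw [← mulVec_mulVec, ← hL0]
    simp [add_mulVec, vecMulVec_mulVec, a₁, a₂, b₂]
  have hLneg : L (fun _ => -1) < 0 := by
    simp only [L]
    refine Finset.sum_neg (fun j _ => ?_) univ_nonempty
    have : (0 : ℤ) ≤ (j : ℤ) := by positivity
    linarith
  have hLsingle : ∀ i, L (Pi.single i 1) = i + 1 := by
    intro i
    simp [L, Pi.single_apply]
  have hL00 : L 0 = 0 := by simp [L]
  -- `L` separates the lattice points of the simplex
  have hLinj : ∀ x ∈ insert 0 (simplexVerts (m + 2)), ∀ y ∈ insert 0 (simplexVerts (m + 2)),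
      x ≠ y → L x ≠ L y := by
    intro x hx y hy hxy hL
    rw [Finset.mem_insert, mem_simplexVerts] at hx hy
    rcases hx with rfl | rfl | ⟨i, rfl⟩ <;> rcases hy with rfl | rfl | ⟨j, rfl⟩ <;>
      simp only [hL00, hLsingle] at hL <;> try first | exact hxy rfl | omega
    exact hxy (by rw [show i = j from Fin.ext (by omega)])
  have hb : ∀ x ∈ insert 0 (simplexVerts (m + 2)), |x 1| ≤ 1 := by
    intro x hx
    rw [Finset.mem_insert, mem_simplexVerts] at hx
    rcases hx with rfl | rfl | ⟨i, rfl⟩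
    · simp
    · simp
    · rw [Pi.single_apply]; split_ifs <;> simp
  intro x hx y hy hxy
  refine ⟨1, ?_⟩
  rw [hA1, hA1]
  have hx1 := abs_le.1 (hb x hx)
  have hy1 := abs_le.1 (hb y hy)
  have hM : M = K + 3 := rfl
  rcases lt_or_gt_of_ne (hLinj x hx y hy hxy) with h | h
  · rw [lt_abs]; right
    nlinarith [mul_le_mul_of_nonneg_left (show L x + 1 ≤ L y from h) (show 0 ≤ M by positivity)]
  · rw [lt_abs]; left
    nlinarith [mul_le_mul_of_nonneg_left (show L y + 1 ≤ L x from h) (show 0 ≤ M by positivity)]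

/-! ### A polynomial function with singleton class -/

/-- The maximum of the linear forms `A x` centred at `p₀`, over the vertices `x` of the simplex. -/
def simplexFn {n : ℕ} (A : Matrix (Fin n) (Fin n) ℤ) (p₀ : Fin n → ℝ) : TropFn n :=
  fun p => (simplexVerts n).sup fun x => ((ldot (A *ᵥ x) (p - p₀) : ℝ) : Trop)

lemma simplexFn_isTropFcn {n : ℕ} (A : Matrix (Fin n) (Fin n) ℤ) (p₀ : Fin n → ℝ) :
    IsTropFcn (simplexFn A p₀) := by
  classical
  refine ⟨(simplexVerts n).image fun x => (-ldot (A *ᵥ x) p₀, A *ᵥ x), fun p => ?_⟩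
  rw [Finset.sup_image]
  refine Finset.sup_congr rfl fun x _ => ?_
  change _ = ((-ldot (A *ᵥ x) p₀ + ldot (A *ᵥ x) p : ℝ) : Trop)
  rw [ldot_sub_right]
  congr 1
  ring

/-- Adjunction between `A` acting on exponents and its transpose acting on points. -/
lemma ldot_mulVec {n : ℕ} (A : Matrix (Fin n) (Fin n) ℤ) (x : Fin n → ℤ) (q : Fin n → ℝ) :
    ldot (A *ᵥ x) q = ldot x (q ᵥ* A.map (Int.cast : ℤ → ℝ)) := by
  have h : (fun i => (((A *ᵥ x) i : ℤ) : ℝ)) =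
      A.map (Int.cast : ℤ → ℝ) *ᵥ (fun i => (x i : ℝ)) := by
    funext i
    simp [mulVec, dotProduct]
  rw [ldot_eq, ldot_eq, h, dotProduct_comm, dotProduct_mulVec, dotProduct_comm]

/-- A monomial lying below `simplexFn A p₀` has its exponent in the image of the simplex. -/
lemma exponent_mem {n : ℕ} {A B : Matrix (Fin n) (Fin n) ℤ} (hBA : B * A = 1)
    (p₀ : Fin n → ℝ) (c : ℝ) (w : Fin n → ℤ)
    (h : ∀ p, ((c + ldot w p : ℝ) : Trop) ≤ simplexFn A p₀ p) :
    B *ᵥ w ∈ insert 0 (simplexVerts n) := by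
  -- moving to infinity from `p₀` along a ray compares the linear parts
  have key : ∀ q : Fin n → ℝ, (∀ y ∈ simplexVerts n, ldot y q ≤ 1) → ldot (B *ᵥ w) q ≤ 1 := by
    intro q hq
    by_contra! hlt
    set r := ldot (B *ᵥ w) q with hr
    have hstep : ∀ t : ℝ, 0 ≤ t → c + ldot w p₀ + t * r ≤ t := by
      intro t ht
      have h1 := h (p₀ + t • (q ᵥ* B.map (Int.cast : ℤ → ℝ)))
      have h2 : simplexFn A p₀ (p₀ + t • (q ᵥ* B.map (Int.cast : ℤ → ℝ))) ≤ (t : Trop) := by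
        refine Finset.sup_le fun y hy => ?_
        rw [WithBot.coe_le_coe, add_sub_cancel_left, ldot_smul_right, ← ldot_mulVec,
          mulVec_mulVec, hBA, one_mulVec]
        exact mul_le_of_le_one_right ht (hq y hy)
      have h3 := WithBot.coe_le_coe.1 (h1.trans h2)
      rw [ldot_add_right, ldot_smul_right, ← ldot_mulVec] at h3
      linarith
    have h4 := hstep ((|c + ldot w p₀| + 1) / (r - 1)) (by
      have : 0 < r - 1 := by linarith
      positivity)
    have h5 : (|c + ldot w p₀| + 1) / (r - 1) * (r - 1) = |c + ldot w p₀| + 1 :=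
      div_mul_cancel₀ _ (by linarith)
    have h6 := neg_abs_le (c + ldot w p₀)
    linarith
  apply simplex_lattice
  · have h1 := key (fun _ => 1) (by
      intro y hy
      rcases mem_simplexVerts.1 hy with rfl | ⟨i, rfl⟩
      · simp [ldot]; linarith [(Nat.cast_nonneg n : (0 : ℝ) ≤ n)]
      · simp [ldot, Pi.single_apply])
    simp only [ldot, mul_one] at h1
    exact_mod_cast h1
  · intro i
    have hval : ∀ y : Fin n → ℤ, ldot y (fun j => 1 - if j = i then (n + 1 : ℝ) else 0) =
        ((∑ j, y j - (n + 1) * y i : ℤ) : ℝ) := by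
      intro y
      simp [ldot, mul_sub, Finset.sum_sub_distrib, mul_comm]
    have h1 := key (fun j => 1 - if j = i then (n + 1 : ℝ) else 0) (by
      intro y hy
      rw [hval]
      rcases mem_simplexVerts.1 hy with rfl | ⟨k, rfl⟩
      · simp
      · simp only [Pi.single_apply]
        split_ifs <;> simp
        linarith [(Nat.cast_nonneg n : (0 : ℝ) ≤ n)])
    rw [hval] at h1
    exact_mod_cast h1

/-- On a closed set avoiding `p₀` the function `simplexFn A p₀` is bounded below by a positive
constant, because its sublevel sets `{f < ε}` shrink to `p₀`. -/
lemma simplexFn_large {n : ℕ} {A B : Matrix (Fin n) (Fin n) ℤ} (hAB : A * B = 1)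
    {Z : Set (Fin n → ℝ)} (hZ : IsClosed Z) {p₀ : Fin n → ℝ} (hp₀ : p₀ ∉ Z) :
    ∃ ε : ℝ, 0 < ε ∧ ∀ p ∈ Z, (ε : Trop) ≤ simplexFn A p₀ p := by
  have hcont : Continuous fun q : Fin n → ℝ => p₀ + q ᵥ* B.map (Int.cast : ℤ → ℝ) := by
    fun_prop
  have hopen := hZ.isOpen_compl.preimage hcont
  obtain ⟨δ, hδ, hball⟩ := Metric.isOpen_iff.1 hopen 0 (by simpa using hp₀)
  refine ⟨δ / (n + 1), by positivity, fun p hp => ?_⟩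
  by_contra! hlt
  have hε : 0 < δ / (n + 1) := by positivity
  have hδε : δ = (n + 1) * (δ / (n + 1)) := by field_simp
  set ε := δ / (n + 1) with hεdef
  set q := (p - p₀) ᵥ* A.map (Int.cast : ℤ → ℝ) with hq
  have hqp : p₀ + q ᵥ* B.map (Int.cast : ℤ → ℝ) = p := by
    have : A.map (Int.cast : ℤ → ℝ) * B.map (Int.cast : ℤ → ℝ) = 1 := by
      have h := congrArg (Int.castRingHom ℝ).mapMatrix hAB
      rwa [map_mul, map_one] at h
    rw [hq, vecMul_vecMul, this, vecMul_one]
    simp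
  have hy : ∀ y ∈ simplexVerts n, ldot y q < ε := by
    intro y hy
    have h1 : ((ldot (A *ᵥ y) (p - p₀) : ℝ) : Trop) ≤ simplexFn A p₀ p :=
      Finset.le_sup (f := fun x => ((ldot (A *ᵥ x) (p - p₀) : ℝ) : Trop)) hy
    rw [hq, ← ldot_mulVec]
    exact WithBot.coe_lt_coe.1 (h1.trans_lt hlt)
  have hup : ∀ i, q i < ε := by
    intro i
    have := hy (Pi.single i 1) (mem_simplexVerts.2 (Or.inr ⟨i, rfl⟩))
    simpa [ldot, Pi.single_apply] using this
  have hsum : -∑ i, q i < ε := by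
    have := hy (fun _ => -1) (mem_simplexVerts.2 (Or.inl rfl))
    simpa [ldot] using this
  have hmem : q ∈ Metric.ball (0 : Fin n → ℝ) δ := by
    rw [mem_ball_zero_iff, pi_norm_lt_iff hδ]
    intro i
    rw [Real.norm_eq_abs, abs_lt]
    have hsplit := Finset.add_sum_erase univ q (mem_univ i)
    have hle : ∑ j ∈ univ.erase i, q j ≤ ∑ j ∈ univ.erase i, ε :=
      Finset.sum_le_sum fun j _ => (hup j).le
    have hn : 1 ≤ n := by have := i.2; omega
    rw [Finset.sum_const, card_erase_of_mem (mem_univ i), card_univ, Fintype.card_fin,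
      nsmul_eq_mul, Nat.cast_sub hn, Nat.cast_one] at hle
    have hn' : (1 : ℝ) ≤ n := by exact_mod_cast hn
    have := hup i
    constructor <;> nlinarith
  have := hball hmem
  rw [Set.mem_preimage, hqp] at this
  exact this hp

/-- If `s` and `t` agree on `Z` and the exponents of `s` are small compared with the spread of `A`,
replacing `s` by `t` in an expression `a ⊙ s ⊕ b` for `simplexFn A p₀` does not change it. -/
lemma simplexFn_rigid {n : ℕ} (hn : 2 ≤ n) {Z : Set (Fin n → ℝ)} (hZ : UnbddAllRatDirs Z)
    {A B : Matrix (Fin n) (Fin n) ℤ} (hAB : A * B = 1) (hBA : B * A = 1) {K : ℕ}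
    (hspread : ∀ x ∈ insert 0 (simplexVerts n), ∀ y ∈ insert 0 (simplexVerts n),
      x ≠ y → ∃ i, ((2 * K : ℕ) : ℤ) < |(A *ᵥ x) i - (A *ᵥ y) i|)
    (p₀ : Fin n → ℝ) {s t a b : TropFn n} (ha : IsTropFcn a) (ht : IsTropFcn t)
    (hs : ∃ C, Represents C s ∧ ∀ x ∈ C, ∀ i, |x.2 i| ≤ K)
    (hst : ∀ p ∈ Z, s p = t p) (h : (a + s) ⊔ b = simplexFn A p₀) :
    (a + t) ⊔ b = simplexFn A p₀ := by
  obtain ⟨D, hD⟩ := ha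
  replace hD : Represents D a := hD
  obtain ⟨C, hC, hK⟩ := hs
  rcases D.eq_empty_or_nonempty with rfl | ⟨d, hd⟩
  · have ha : ∀ p, a p = ⊥ := fun p => by rw [hD]; simp
    rw [← h]
    funext p
    simp [ha]
  have hexp : ∀ x ∈ C, B *ᵥ (d.2 + x.2) ∈ insert 0 (simplexVerts n) := by
    intro x hx
    refine exponent_mem hBA p₀ (d.1 + x.1) _ fun p => ?_
    have h1 : ((d.1 + ldot d.2 p : ℝ) : Trop) ≤ a p := by
      rw [hD]
      exact Finset.le_sup (f := fun t => ((t.1 + ldot t.2 p : ℝ) : Trop)) hd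
    have h2 : ((x.1 + ldot x.2 p : ℝ) : Trop) ≤ s p := by
      rw [hC]
      exact Finset.le_sup (f := fun t => ((t.1 + ldot t.2 p : ℝ) : Trop)) hx
    have h3 := add_le_add h1 h2
    rw [← WithBot.coe_add] at h3
    rw [← h]
    refine le_trans (le_of_eq ?_) (h3.trans (le_sup_left : (a + s) p ≤ (a + s) p ⊔ b p))
    rw [ldot_add_left]
    congr 1
    ring
  have hmono : ∀ x ∈ C, ∀ y ∈ C, x.2 = y.2 := by
    intro x hx y hy
    by_contra hne
    have hback : ∀ v, A *ᵥ (B *ᵥ v) = v := fun v => by rw [mulVec_mulVec, hAB, one_mulVec]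
    obtain ⟨i, hi⟩ := hspread _ (hexp x hx) _ (hexp y hy) (by
      intro he
      have := congrArg (A *ᵥ ·) he
      simp only [hback] at this
      exact hne (add_left_cancel this))
    rw [hback, hback, Pi.add_apply, Pi.add_apply, add_sub_add_left_eq_sub] at hi
    have := abs_sub (x.2 i) (y.2 i)
    have := hK x hx i
    have := hK y hy i
    push_cast at hi
    linarith
  rw [eq_of_monomial hn hZ hC hmono ht hst, h]

lemma exists_bound {n : ℕ} {f : TropFn n} (hf : IsTropFcn f) :
    ∃ K : ℕ, ∃ C, Represents C f ∧ ∀ x ∈ C, ∀ i, |x.2 i| ≤ K := by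
  obtain ⟨C, hC⟩ := hf
  refine ⟨C.sup fun x => univ.sup fun i => (x.2 i).natAbs, C, hC, fun x hx i => ?_⟩
  rw [Int.abs_eq_natAbs]
  refine Int.ofNat_le.2 ?_
  exact (Finset.le_sup (f := fun i => (x.2 i).natAbs) (mem_univ i)).trans
    (Finset.le_sup (f := fun x : ℝ × (Fin n → ℤ) => univ.sup fun i => (x.2 i).natAbs) hx)

/-- If `n ≥ 2` and `Z` is a proper closed subset of `ℝⁿ` unbounded in all
rational directions, then the congruence `𝐄(Z)` is not finitely generated. -/
theorem stmt0 (n : ℕ) (hn : 2 ≤ n) (Z : Set (Fin n → ℝ))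
    (hZclosed : IsClosed Z) (hZproper : Z ≠ Set.univ)
    (hZunbdd : UnbddAllRatDirs Z) :
    ¬ ∃ S : Set (TropFn n × TropFn n),
        S.Finite ∧ (∀ fg ∈ S, IsTropFcn fg.1 ∧ IsTropFcn fg.2) ∧
        Econg n Z = congGen n S := by
  rintro ⟨S, hfin, hS, hE⟩
  obtain ⟨p₀, hp₀⟩ := (Set.ne_univ_iff_exists_notMem Z).1 hZproper
  have hSE : ∀ fg ∈ S, ∀ p ∈ Z, fg.1 p = fg.2 p := by
    intro fg hfg
    have hmem : fg ∈ Econg n Z := by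
      rw [hE]
      exact Set.mem_sInter.2 fun E hE => hE.2 hfg
    exact hmem.2.2
  -- a common bound on the exponents occurring in the generators
  obtain ⟨K, hK⟩ : ∃ K : ℕ, ∀ fg ∈ S,
      (∃ C, Represents C fg.1 ∧ ∀ x ∈ C, ∀ i, |x.2 i| ≤ K) ∧
      (∃ C, Represents C fg.2 ∧ ∀ x ∈ C, ∀ i, |x.2 i| ≤ K) := by
    choose! k₁ hk₁ using fun fg (h : fg ∈ S) => exists_bound (hS fg h).1
    choose! k₂ hk₂ using fun fg (h : fg ∈ S) => exists_bound (hS fg h).2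
    refine ⟨hfin.toFinset.sup fun fg => max (k₁ fg) (k₂ fg), fun fg hfg => ?_⟩
    have hle := Finset.le_sup (f := fun fg => max (k₁ fg) (k₂ fg)) (hfin.mem_toFinset.2 hfg)
    obtain ⟨C₁, h₁, h₁'⟩ := hk₁ fg hfg
    obtain ⟨C₂, h₂, h₂'⟩ := hk₂ fg hfg
    exact ⟨⟨C₁, h₁, fun x hx i => (h₁' x hx i).trans
        (Int.ofNat_le.2 ((le_max_left _ _).trans hle))⟩,
      ⟨C₂, h₂, fun x hx i => (h₂' x hx i).trans
        (Int.ofNat_le.2 ((le_max_right _ _).trans hle))⟩⟩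
  obtain ⟨A, B, hAB, hBA, hspread⟩ := exists_spreading hn (2 * K)
  obtain ⟨ε, hε, hlarge⟩ := simplexFn_large hAB hZclosed hp₀
  have hf := simplexFn_isTropFcn A p₀
  have hgen : S ⊆ syntacticCong (simplexFn A p₀) := by
    intro fg hfg
    refine ⟨(hS fg hfg).1, (hS fg hfg).2, fun a b ha _ => ⟨fun h => ?_, fun h => ?_⟩⟩
    · exact simplexFn_rigid hn hZunbdd hAB hBA hspread p₀ ha (hS fg hfg).2 (hK fg hfg).1
        (hSE fg hfg) h
    · exact simplexFn_rigid hn hZunbdd hAB hBA hspread p₀ ha (hS fg hfg).1 (hK fg hfg).2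
        (fun p hp => (hSE fg hfg p hp).symm) h
  have hpair : (simplexFn A p₀, simplexFn A p₀ ⊔ fun _ => (ε : Trop)) ∈ Econg n Z := by
    refine ⟨hf, hf.sup (isTropFcn_const ε), fun p hp => ?_⟩
    exact (sup_eq_left.2 (hlarge p hp)).symm
  rw [hE] at hpair
  have hmem := Set.mem_sInter.1 hpair _ ⟨syntacticCong_isTropCongruence _, hgen⟩
  -- the context `a = 0`, `b = -∞` separates `f` from `f ⊔ ε`
  have hctx := hmem.2.2 0 ⊥ (isTropFcn_const 0) isTropFcn_bot
  simp only [zero_add, sup_bot_eq, true_iff] at hctx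
  have hval := congrFun hctx p₀
  have h0 : simplexFn A p₀ p₀ ≤ ((0 : ℝ) : Trop) := by
    refine Finset.sup_le fun x _ => ?_
    simp [ldot]
  have h1 : (ε : Trop) ≤ simplexFn A p₀ p₀ := by
    rw [← hval]
    exact le_sup_right
  exact absurd (WithBot.coe_le_coe.1 (h1.trans h0)) (not_le.2 hε)
end
end

section
/- Let h ∈ 𝕋[x₁^±,…,xₙ^±]_fcn and suppose h = (f_{1,1} ⊙ ⋯ ⊙ f_{1,k₁}) ⊕ ⋯ ⊕ (f_{l,1} ⊙ ⋯ ⊙ f_{l,k_l}) for functions f_{i,j} ∈ 𝕋[x₁^±,…,xₙ^±]_fcn with f_{i,j} ≠ −∞ for all i,j (here ⊕ is pointwise maximum and ⊙ is pointwise addition of functions). Then for every i,j there exists p ∈ ℤⁿ such that Newt(f_{i,j}) ⊆ Newt(h) + p; that is, each Newt(f_{i,j}) is included in an integer translation of Newt(h). -/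
/-!
If an affine function `p ↦ c + w·p` with `w ∈ ℤⁿ` is bounded above by a tropical Laurent
polynomial function `h`, then `w ∈ Newt h`: otherwise a linear functional strictly separates `w`
from the polytope, and the bound fails far out in the corresponding direction
(`mem_convexHull_of_affine_le`).

Fix an exponent `u j'` of every factor `f i j'` with `j' ≠ j`. For every exponent `v` of `f i j`,
the product of the corresponding terms is an affine function below `∑ j', f i j' ≤ h`, so
`v + ∑ j' ≠ j, u j' ∈ Newt h`. Hence the translation by `-∑ j' ≠ j, u j'` works. In particular
neither the independence of `Newt` of the representation nor the formulas for the Newton polytope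
of sums and products are needed.
-/

noncomputable section

open Classical

/-- The Newton polytope of a tropical Laurent polynomial function: the convex hull in `ℝⁿ`
of the exponents of (any) defining tropical Laurent polynomial.  (This does not depend on
the chosen representation.)  `Newt (-∞) = ∅`, and `Newt f = ∅` for `f` not a tropical
Laurent polynomial function. -/
def Newt {n : ℕ} (f : TropFn n) : Set (Fin n → ℝ) :=
  if h : IsTropFcn f then
    convexHull ℝ
      ((fun u : Fin n → ℤ => fun i => (u i : ℝ)) ''
        ((h.choose.image Prod.snd : Finset (Fin n → ℤ)) : Set (Fin n → ℤ)))
  else ∅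

/-- The exponent of an affine function lying below a maximum of affine terms belongs to the convex
hull of the exponents of these terms. -/
lemma mem_convexHull_of_affine_le {n : ℕ} (A : Finset (ℝ × (Fin n → ℤ))) (c : ℝ) (w : Fin n → ℤ)
    (hle : ∀ p : Fin n → ℝ, ((c + ∑ i, (w i : ℝ) * p i : ℝ) : Trop) ≤
      A.sup fun t => ((t.1 + ∑ i, (t.2 i : ℝ) * p i : ℝ) : Trop)) :
    (fun i => (w i : ℝ)) ∈ convexHull ℝ
      ((fun u : Fin n → ℤ => fun i => (u i : ℝ)) ''
        ((A.image Prod.snd : Finset (Fin n → ℤ)) : Set (Fin n → ℤ))) := by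
  by_contra hw
  obtain ⟨g, b, hg, hb⟩ := geometric_hahn_banach_closed_point (convex_convexHull ℝ _)
    (((Finset.finite_toSet _).image _).isClosed_convexHull ℝ) hw
  obtain ⟨M, hM⟩ : ∃ M : ℝ, ∀ a ∈ A, a.1 ≤ M := by
    obtain ⟨M, hM⟩ := (A.image Prod.fst).bddAbove
    exact ⟨M, fun a ha => hM (Finset.mem_coe.2 (Finset.mem_image_of_mem _ ha))⟩
  -- The separating functional `g` is the pairing with the vector of its values on the basis.
  have hdot : ∀ (t : ℝ) (v : Fin n → ℤ),
      ∑ i, (v i : ℝ) * (t * g (Pi.single i 1)) = t * g (fun i => (v i : ℝ)) := by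
    intro t v
    have h1 := LinearMap.pi_apply_eq_sum_univ g.toLinearMap (fun i => (v i : ℝ))
    have h2 : g (fun i => (v i : ℝ)) = ∑ i, (v i : ℝ) * g (Pi.single i 1) := by
      have h3 : ∀ i : Fin n, (fun m => if i = m then (1 : ℝ) else 0) = Pi.single i 1 := by
        intro i
        ext m
        simp [Pi.single_apply, eq_comm]
      simpa [h3] using h1
    rw [h2, Finset.mul_sum]
    exact Finset.sum_congr rfl fun i _ => by ring
  set x : Fin n → ℝ := fun i => (w i : ℝ) with hx
  have hpos : 0 < g x - b := sub_pos.2 hb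
  -- Far enough out, the gap `t * (g x - b)` exceeds the gap `M - c` between the constant terms.
  set t : ℝ := (|M - c| + 1) / (g x - b) with ht
  have htpos : 0 < t := by positivity
  have hmul : t * (g x - b) = |M - c| + 1 := div_mul_cancel₀ _ hpos.ne'
  have key := hle fun i => t * g (Pi.single i 1)
  have hup : (A.sup fun a => ((a.1 + ∑ i, (a.2 i : ℝ) * (t * g (Pi.single i 1)) : ℝ) : Trop)) ≤
      ((M + t * b : ℝ) : Trop) := by
    refine Finset.sup_le fun a ha => WithBot.coe_le_coe.2 ?_
    rw [hdot]
    have hab := hg _ (subset_convexHull ℝ _ ⟨a.2, by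
      exact Finset.mem_coe.2 (Finset.mem_image_of_mem _ ha), rfl⟩)
    exact add_le_add (hM a ha) (mul_le_mul_of_nonneg_left hab.le htpos.le)
  have hfin := WithBot.coe_le_coe.1 (key.trans hup)
  rw [hdot] at hfin
  have := le_abs_self (M - c)
  nlinarith

/-- If `h = ⊕ᵢ (fᵢ₁ ⊙ ⋯ ⊙ fᵢ_{kᵢ})` with all `fᵢⱼ ≠ -∞`, then each
`Newt (fᵢⱼ)` is contained in an integer translation of `Newt h`. -/
theorem stmt3 (n l : ℕ) (hl : 1 ≤ l) (k : Fin l → ℕ) (hk : ∀ i, 1 ≤ k i)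
    (f : (i : Fin l) → Fin (k i) → TropFn n)
    (hf : ∀ i j, IsTropFcn (f i j)) (hne : ∀ i j, f i j ≠ fun _ => (⊥ : Trop))
    (h : TropFn n) (hh : IsTropFcn h)
    (hrep : h = Finset.univ.sup fun i => ∑ j, f i j) :
    ∀ i j, ∃ p : Fin n → ℤ,
      Newt (f i j) ⊆ (fun x : Fin n → ℝ => x + (fun i' => (p i' : ℝ))) '' Newt h := by
  intro i j
  have hAne : ∀ j', (hf i j').choose.Nonempty := by
    intro j'
    by_contra hemp
    rw [Finset.not_nonempty_iff_eq_empty] at hemp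
    apply hne i j'
    funext p
    rw [(hf i j').choose_spec p, hemp, Finset.sup_empty]
  choose a ha using hAne
  refine ⟨fun m => -∑ j' ∈ Finset.univ.erase j, (a j').2 m, ?_⟩
  have hconv : Convex ℝ (Newt h) := by
    rw [Newt, dif_pos hh]
    exact convex_convexHull ℝ _
  rw [Newt, dif_pos (hf i j)]
  refine convexHull_min ?_ ?_
  swap
  · have := hconv.translate
      (fun m => ((-∑ j' ∈ Finset.univ.erase j, (a j').2 m : ℤ) : ℝ))
    simpa only [add_comm] using this
  rintro _ ⟨v, hv, rfl⟩
  obtain ⟨s, hs, rfl⟩ := Finset.mem_image.1 (Finset.mem_coe.1 hv)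
  -- The chosen terms, with the one of the factor `j` replaced by `s`.
  set e : Fin (k i) → ℝ × (Fin n → ℤ) := Function.update a j s with he
  have hmem : ∀ j', e j' ∈ (hf i j').choose := by
    intro j'
    by_cases hj : j' = j
    · subst hj
      simpa [he] using hs
    · simpa [he, hj] using ha j'
  have hsum : ∀ m, ∑ j', (e j').2 m = s.2 m + ∑ j' ∈ Finset.univ.erase j, (a j').2 m := by
    intro m
    rw [← Finset.add_sum_erase _ _ (Finset.mem_univ j)]
    congr 1
    · simp [he]
    · exact Finset.sum_congr rfl fun j' hj' => by simp [he, Finset.ne_of_mem_erase hj']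
  have hin : (fun m => ((∑ j', (e j').2 m : ℤ) : ℝ)) ∈ Newt h := by
    rw [Newt, dif_pos hh]
    refine mem_convexHull_of_affine_le _ (∑ j', (e j').1) (fun m => ∑ j', (e j').2 m) fun p => ?_
    rw [← hh.choose_spec p, hrep, Finset.sup_apply]
    refine le_trans ?_ (Finset.le_sup (f := fun i => (∑ j, f i j) p) (Finset.mem_univ i))
    have hreal : (∑ j', (e j').1) + ∑ m, ((∑ j', (e j').2 m : ℤ) : ℝ) * p m =
        ∑ j', ((e j').1 + ∑ m, ((e j').2 m : ℝ) * p m) := by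
      push_cast
      rw [Finset.sum_add_distrib, Finset.sum_comm (s := Finset.univ (α := Fin (k i)))]
      simp only [Finset.sum_mul]
    rw [hreal, WithBot.coe_sum, Finset.sum_apply]
    refine Finset.sum_le_sum fun j' _ => ?_
    rw [(hf i j').choose_spec p]
    exact Finset.le_sup
      (f := fun t : ℝ × (Fin n → ℤ) => ((t.1 + ∑ i, (t.2 i : ℝ) * p i : ℝ) : Trop)) (hmem j')
  refine ⟨_, hin, ?_⟩
  funext m
  simp only [Pi.add_apply, hsum]
  push_cast
  ring
end
end

section
/- Let E be a finitely generated congruence on 𝕋[x₁^±,…,xₙ^±]_fcn with a fixed finite generating set {(f₁,g₁),…,(f_k,g_k)}, i.e., E = ⟨(f₁,g₁),…,(f_k,g_k)⟩. Assume there is a pair (h₁,h₂) ∈ E with h₁ ≠ h₂. Then there exist an index i ∈ {1,…,k} and a vector p ∈ ℤⁿ such that Newt(fᵢ) ⊆ Newt(h₁) + p or Newt(gᵢ) ⊆ Newt(h₁) + p; that is, at least one of Newt(f₁), Newt(g₁), …, Newt(f_k), Newt(g_k) is included in an integer translation of Newt(h₁). -/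
/-!
The proof exhibits an explicit congruence containing the generators. Call a function `h` *large*
if an integer translate of `Newt h` contains some `Newt (fg i).1` or `Newt (fg i).2`, and relate two
tropical Laurent polynomial functions when they are equal or both large. The generators are
themselves large, so it suffices that this relation is a congruence; then `h₁ ≠ h₂` forces `h₁` to
be large.

Compatibility with the operations rests on one monotonicity fact (`Large.of_le`): if
`a + (c + p·x) ≤ b` pointwise for some `c ∈ ℝ` and `p ∈ ℤⁿ`, then `Newt a + p ⊆ Newt b`, so `b` is
large whenever `a` is. It applies to `a ≤ a ⊔ b`, and to `a + b` by bounding `b ≠ -∞` below by one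
of its monomials. Monotonicity follows from `mem_newt_of_monomial_le`: the exponent of a monomial
lying below `h` belongs to `Newt h`, since otherwise a separating linear functional gives a
direction along which the monomial outgrows `h`.
-/

noncomputable section

open Classical

theorem newt_spec {n : ℕ} {f : TropFn n} (hf : IsTropFcn f) :
    ∃ A : Finset (ℝ × (Fin n → ℤ)),
      (∀ p, f p = A.sup fun t => ((t.1 + ∑ i, (t.2 i : ℝ) * p i : ℝ) : Trop)) ∧
      Newt f = convexHull ℝ ((fun t : ℝ × (Fin n → ℤ) => fun i => (t.2 i : ℝ)) '' (A : Set _)) := by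
  refine ⟨hf.choose, hf.choose_spec, ?_⟩
  rw [Newt, dif_pos hf, Finset.coe_image, Set.image_image]

/-- The exponent of a monomial lying below `h` belongs to the Newton polytope of `h`. -/
theorem mem_newt_of_monomial_le {n : ℕ} {h : TropFn n} (hh : IsTropFcn h) (d : ℝ) (u : Fin n → ℤ)
    (hle : ∀ x : Fin n → ℝ, ((d + ∑ i, (u i : ℝ) * x i : ℝ) : Trop) ≤ h x) :
    (fun i => (u i : ℝ)) ∈ Newt h := by
  obtain ⟨B, hB, hN⟩ := newt_spec hh
  rw [hN]
  by_contra hu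
  have hcl := ((B.finite_toSet.image
    (fun t : ℝ × (Fin n → ℤ) => fun i => (t.2 i : ℝ))).isClosed_convexHull (𝕜 := ℝ))
  obtain ⟨l, α, hl, hα⟩ := geometric_hahn_banach_closed_point (convex_convexHull ℝ _) hcl hu
  have hsum : ∀ v : Fin n → ℝ, l v = ∑ i, v i * l (Pi.single i 1) := by
    intro v
    conv_lhs => rw [pi_eq_sum_univ' v]
    simp [map_sum, map_smul]
  obtain ⟨M, hM⟩ := (B.image Prod.fst).exists_le
  -- At time `t` along the direction representing `l`, the monomial exceeds every term of `h`.
  set δ := l (fun i => (u i : ℝ)) - α with hδ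
  have hδ0 : 0 < δ := sub_pos.2 hα
  set t := (|M - d| + 1) / δ with ht
  have ht0 : 0 < t := by positivity
  have htδ : t * δ = |M - d| + 1 := by rw [ht]; field_simp
  have hx := hle fun i => t * l (Pi.single i 1)
  have hlin : ∀ v : Fin n → ℤ,
      ∑ i, (v i : ℝ) * (t * l (Pi.single i 1)) = t * l (fun i => (v i : ℝ)) := by
    intro v
    rw [hsum, Finset.mul_sum]
    exact Finset.sum_congr rfl fun i _ => by ring
  rw [hB, hlin] at hx
  rcases B.eq_empty_or_nonempty with rfl | hne
  · exact WithBot.coe_ne_bot (le_bot_iff.1 hx)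
  obtain ⟨b, hb, hbe⟩ := Finset.exists_mem_eq_sup B hne
    fun s : ℝ × (Fin n → ℤ) => ((s.1 + ∑ i, (s.2 i : ℝ) * (t * l (Pi.single i 1)) : ℝ) : Trop)
  rw [hbe, hlin, WithBot.coe_le_coe] at hx
  have h1 : b.1 ≤ M := hM _ (Finset.mem_image_of_mem _ hb)
  have h2 : t * l (fun i => (b.2 i : ℝ)) ≤ t * α :=
    mul_le_mul_of_nonneg_left (hl _ (subset_convexHull ℝ _ ⟨b, hb, rfl⟩)).le ht0.le
  have h3 := le_abs_self (M - d)
  have h4 : t * δ = t * l (fun i => (u i : ℝ)) - t * α := by rw [hδ]; ring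
  linarith

theorem newt_translate_subset {n : ℕ} {a b : TropFn n} (ha : IsTropFcn a) (hb : IsTropFcn b)
    (c : ℝ) (p : Fin n → ℤ)
    (hle : ∀ x : Fin n → ℝ, a x + ((c + ∑ i, (p i : ℝ) * x i : ℝ) : Trop) ≤ b x) :
    ∀ y ∈ Newt a, y + (fun i => (p i : ℝ)) ∈ Newt b := by
  obtain ⟨A, hA, hN⟩ := newt_spec ha
  have hconv : Convex ℝ (Newt b) := by
    obtain ⟨B, -, hNb⟩ := newt_spec hb
    rw [hNb]; exact convex_convexHull ℝ _
  have hsub : Newt a ⊆ (fun y => y + (fun i => (p i : ℝ))) ⁻¹' Newt b := by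
    rw [hN]
    refine convexHull_min ?_ (hconv.translate_preimage_left _)
    rintro _ ⟨s, hs, rfl⟩
    have := mem_newt_of_monomial_le hb (s.1 + c) (s.2 + p) fun x => by
      refine le_trans ?_ (hle x)
      rw [hA]
      refine le_trans (le_of_eq ?_) (add_le_add_left (Finset.le_sup hs) _)
      rw [← WithBot.coe_add]
      congr 1
      simp only [Pi.add_apply, Int.cast_add, add_mul, Finset.sum_add_distrib]
      ring
    rw [Set.mem_preimage]
    convert this using 1
    ext i
    simp
  exact hsub

theorem IsTropFcn.sup_s4 {n : ℕ} {a b : TropFn n} (ha : IsTropFcn a) (hb : IsTropFcn b) :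
    IsTropFcn (a ⊔ b) := by
  obtain ⟨A, hA⟩ := ha
  obtain ⟨B, hB⟩ := hb
  exact ⟨A ∪ B, fun p => by rw [Finset.sup_union, Pi.sup_apply, hA, hB]⟩

theorem IsTropFcn.eq_bot_or {n : ℕ} {a : TropFn n} (ha : IsTropFcn a) :
    a = ⊥ ∨ ∃ (c : ℝ) (p : Fin n → ℤ),
      ∀ x : Fin n → ℝ, ((c + ∑ i, (p i : ℝ) * x i : ℝ) : Trop) ≤ a x := by
  obtain ⟨A, hA⟩ := ha
  rcases A.eq_empty_or_nonempty with rfl | ⟨s, hs⟩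
  · left; ext1 p; simp [hA]
  · refine Or.inr ⟨s.1, s.2, fun x => ?_⟩
    rw [hA]
    exact Finset.le_sup (f := fun t : ℝ × (Fin n → ℤ) =>
      ((t.1 + ∑ i, (t.2 i : ℝ) * x i : ℝ) : Trop)) hs

theorem IsTropFcn.add_s4 {n : ℕ} {a b : TropFn n} (ha : IsTropFcn a) (hb : IsTropFcn b) :
    IsTropFcn (a + b) := by
  obtain ⟨A, hA⟩ := ha
  obtain ⟨B, hB⟩ := hb
  refine ⟨(A ×ˢ B).image fun s => s.1 + s.2, fun x => ?_⟩
  have key : ∀ s t : ℝ × (Fin n → ℤ),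
      (((s + t).1 + ∑ i, ((s + t).2 i : ℝ) * x i : ℝ) : Trop) =
      ((s.1 + ∑ i, (s.2 i : ℝ) * x i : ℝ) : Trop) +
        ((t.1 + ∑ i, (t.2 i : ℝ) * x i : ℝ) : Trop) := by
    intro s t
    rw [← WithBot.coe_add]
    congr 1
    simp only [Prod.fst_add, Prod.snd_add, Pi.add_apply, Int.cast_add, add_mul,
      Finset.sum_add_distrib]
    ring
  rw [Pi.add_apply, hA, hB]
  apply le_antisymm
  · rcases A.eq_empty_or_nonempty with rfl | hAne
    · simp
    rcases B.eq_empty_or_nonempty with rfl | hBne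
    · simp
    obtain ⟨s, hs, hse⟩ := Finset.exists_mem_eq_sup A hAne
      fun t : ℝ × (Fin n → ℤ) => ((t.1 + ∑ i, (t.2 i : ℝ) * x i : ℝ) : Trop)
    obtain ⟨t, ht, hte⟩ := Finset.exists_mem_eq_sup B hBne
      fun t : ℝ × (Fin n → ℤ) => ((t.1 + ∑ i, (t.2 i : ℝ) * x i : ℝ) : Trop)
    rw [hse, hte, ← key]
    exact Finset.le_sup (f := fun t : ℝ × (Fin n → ℤ) =>
      ((t.1 + ∑ i, (t.2 i : ℝ) * x i : ℝ) : Trop))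
      (Finset.mem_image.2 ⟨(s, t), Finset.mem_product.2 ⟨hs, ht⟩, rfl⟩)
  · refine Finset.sup_le fun r hr => ?_
    obtain ⟨⟨s, t⟩, hst, rfl⟩ := Finset.mem_image.1 hr
    obtain ⟨hs, ht⟩ := Finset.mem_product.1 hst
    rw [key]
    exact add_le_add
      (Finset.le_sup (f := fun t : ℝ × (Fin n → ℤ) =>
        ((t.1 + ∑ i, (t.2 i : ℝ) * x i : ℝ) : Trop)) hs)
      (Finset.le_sup (f := fun t : ℝ × (Fin n → ℤ) =>
        ((t.1 + ∑ i, (t.2 i : ℝ) * x i : ℝ) : Trop)) ht)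

/-- `Large fg h`: the Newton polytope of an entry of one of the pairs `fg i` is contained in an
integer translate of `Newt h`. -/
def Large {n k : ℕ} (fg : Fin k → TropFn n × TropFn n) (h : TropFn n) : Prop :=
  ∃ (i : Fin k) (p : Fin n → ℤ),
    Newt (fg i).1 ⊆ (fun x : Fin n → ℝ => x + (fun i' => (p i' : ℝ))) '' Newt h ∨
    Newt (fg i).2 ⊆ (fun x : Fin n → ℝ => x + (fun i' => (p i' : ℝ))) '' Newt h

theorem Large.of_le {n k : ℕ} {fg : Fin k → TropFn n × TropFn n} {a b : TropFn n}
    (hL : Large fg a) (ha : IsTropFcn a) (hb : IsTropFcn b) (c : ℝ) (p : Fin n → ℤ)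
    (hle : ∀ x : Fin n → ℝ, a x + ((c + ∑ i, (p i : ℝ) * x i : ℝ) : Trop) ≤ b x) :
    Large fg b := by
  obtain ⟨i, q, h⟩ := hL
  have hsub : (fun x : Fin n → ℝ => x + (fun i' => (q i' : ℝ))) '' Newt a ⊆
      (fun x : Fin n → ℝ => x + (fun i' => ((q - p) i' : ℝ))) '' Newt b := by
    rintro _ ⟨y, hy, rfl⟩
    refine ⟨_, newt_translate_subset ha hb c p hle y hy, ?_⟩
    ext j
    simp
  exact ⟨i, q - p, h.imp (fun h => h.trans hsub) (fun h => h.trans hsub)⟩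

theorem Large.sup_s4 {n k : ℕ} {fg : Fin k → TropFn n × TropFn n} {a b : TropFn n}
    (hL : Large fg a) (ha : IsTropFcn a) (hb : IsTropFcn b) : Large fg (a ⊔ b) :=
  hL.of_le ha (ha.sup_s4 hb) 0 0 fun x => by simp

theorem Large.add_s4 {n k : ℕ} {fg : Fin k → TropFn n × TropFn n} {a b : TropFn n}
    (hL : Large fg a) (ha : IsTropFcn a) (hb : IsTropFcn b) (hb0 : b ≠ ⊥) : Large fg (a + b) := by
  obtain ⟨c, p, h⟩ := hb.eq_bot_or.resolve_left hb0
  exact hL.of_le ha (ha.add_s4 hb) c p fun x => add_le_add_right (h x) _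

/-- The polytope of `-∞` is empty, so if `-∞` is large then every function is. -/
theorem Large.of_bot {n k : ℕ} {fg : Fin k → TropFn n × TropFn n}
    (hL : Large fg ⊥) (b : TropFn n) (hb : IsTropFcn b) : Large fg b :=
  hL.of_le ⟨∅, fun p => by simp⟩ hb 0 0 fun x => by simp

theorem large_add_pair {n k : ℕ} {fg : Fin k → TropFn n × TropFn n} {f₁ g₁ f₂ g₂ : TropFn n}
    (hf₁ : IsTropFcn f₁) (hg₁ : IsTropFcn g₁) (hf₂ : IsTropFcn f₂) (hg₂ : IsTropFcn g₂)
    (h₁ : Large fg f₁ ∧ Large fg g₁) (h₂ : f₂ = g₂ ∨ Large fg f₂ ∧ Large fg g₂) :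
    f₁ + f₂ = g₁ + g₂ ∨ Large fg (f₁ + f₂) ∧ Large fg (g₁ + g₂) := by
  rcases h₂ with rfl | ⟨hLf, hLg⟩
  · by_cases h0 : f₂ = ⊥
    · left; ext1 x; simp [h0]
    · exact Or.inr ⟨h₁.1.add_s4 hf₁ hf₂ h0, h₁.2.add_s4 hg₁ hf₂ h0⟩
  · right
    constructor
    · by_cases h0 : f₂ = ⊥
      · exact (h0 ▸ hLf).of_bot _ (hf₁.add_s4 hf₂)
      · exact h₁.1.add_s4 hf₁ hf₂ h0
    · by_cases h0 : g₂ = ⊥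
      · exact (h0 ▸ hLg).of_bot _ (hg₁.add_s4 hg₂)
      · exact h₁.2.add_s4 hg₁ hg₂ h0

theorem large_congruence {n k : ℕ} (fg : Fin k → TropFn n × TropFn n) :
    IsTropCongruence n {q | IsTropFcn q.1 ∧ IsTropFcn q.2 ∧
      (q.1 = q.2 ∨ Large fg q.1 ∧ Large fg q.2)} where
  mem_left _ _ h := h.1
  mem_right _ _ h := h.2.1
  refl _ h := ⟨h, h, Or.inl rfl⟩
  symm _ _ h := ⟨h.2.1, h.1, h.2.2.imp Eq.symm And.symm⟩
  trans := by
    rintro f g h ⟨hf, hg, h1⟩ ⟨-, hh, h2⟩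
    refine ⟨hf, hh, ?_⟩
    dsimp only at *
    rcases h1 with rfl | h1
    · exact h2
    · rcases h2 with rfl | h2
      · exact Or.inr h1
      · exact Or.inr ⟨h1.1, h2.2⟩
  add_compat := by
    rintro f₁ g₁ f₂ g₂ ⟨hf₁, hg₁, h1⟩ ⟨hf₂, hg₂, h2⟩
    refine ⟨hf₁.sup_s4 hf₂, hg₁.sup_s4 hg₂, ?_⟩
    dsimp only at *
    rcases h1 with rfl | h1
    · rcases h2 with rfl | h2
      · exact Or.inl rfl
      · right
        rw [sup_comm f₁, sup_comm f₁]
        exact ⟨h2.1.sup_s4 hf₂ hf₁, h2.2.sup_s4 hg₂ hf₁⟩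
    · exact Or.inr ⟨h1.1.sup_s4 hf₁ hf₂, h1.2.sup_s4 hg₁ hg₂⟩
  mul_compat := by
    rintro f₁ g₁ f₂ g₂ ⟨hf₁, hg₁, h1⟩ ⟨hf₂, hg₂, h2⟩
    refine ⟨hf₁.add_s4 hf₂, hg₁.add_s4 hg₂, ?_⟩
    dsimp only at *
    rcases h1 with rfl | h1
    · rcases h2 with rfl | h2
      · exact Or.inl rfl
      · rw [add_comm f₁, add_comm f₁]
        exact large_add_pair hf₂ hg₂ hf₁ hf₁ h2 (Or.inl rfl)
    · exact large_add_pair hf₁ hg₁ hf₂ hg₂ h1 h2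

/-- If `E = ⟨(f₁,g₁),…,(f_k,g_k)⟩` is a finitely generated congruence on
the semiring of tropical Laurent polynomial functions and `(h₁,h₂) ∈ E` with `h₁ ≠ h₂`,
then some `Newt fᵢ` or `Newt gᵢ` is contained in an integer translation of `Newt h₁`. -/
theorem stmt4 (n k : ℕ) (fg : Fin k → TropFn n × TropFn n)
    (hfg : ∀ i, IsTropFcn (fg i).1 ∧ IsTropFcn (fg i).2)
    (E : Set (TropFn n × TropFn n)) (hE : E = congGen n (Set.range fg))
    (h₁ h₂ : TropFn n) (hmem : (h₁, h₂) ∈ E) (hne : h₁ ≠ h₂) :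
    ∃ (i : Fin k) (p : Fin n → ℤ),
      Newt (fg i).1 ⊆ (fun x : Fin n → ℝ => x + (fun i' => (p i' : ℝ))) '' Newt h₁ ∨
      Newt (fg i).2 ⊆ (fun x : Fin n → ℝ => x + (fun i' => (p i' : ℝ))) '' Newt h₁ := by
  subst hE
  have hsub : Set.range fg ⊆ {q | IsTropFcn q.1 ∧ IsTropFcn q.2 ∧
      (q.1 = q.2 ∨ Large fg q.1 ∧ Large fg q.2)} := by
    rintro _ ⟨i, rfl⟩
    refine ⟨(hfg i).1, (hfg i).2, Or.inr ⟨⟨i, 0, Or.inl ?_⟩, ⟨i, 0, Or.inr ?_⟩⟩⟩ <;>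
    · intro y hy
      refine ⟨y, hy, ?_⟩
      ext j
      simp
  have h := hmem _ ⟨large_congruence fg, hsub⟩
  exact (h.2.2.resolve_left hne).1
end
end

section
/- Let Z ⊆ ℝⁿ be a closed subset with 0 ∉ Z. Let P ⊆ ℝⁿ be an n-dimensional lattice polytope (the convex hull of a finite subset of ℤⁿ, of affine dimension n) that contains a lattice point in its topological interior. Then there exists a pair (f,g) ∈ E(Z), i.e., f,g ∈ 𝕋[x₁^±,…,xₙ^±]_fcn with f|_Z = g|_Z, such that f ≠ g and Newt(f) = P. -/
/-!
Take `f = max_{v ∈ V} v·p` and `g = max (f, ε + w·p)`, where `w` is an interior lattice point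
of `P`. At the origin `f = 0 < ε = g` (`V` is nonempty), so `f ≠ g`. If the sup-norm ball of
radius `δ` about `w` lies in `P`, then `f(p) ≥ w·p + δ‖p‖` for every `p`, because a linear
functional on `P` attains its maximum on `V` (`exists_vertex_ge`). As `Z` is closed and misses
the origin, `‖p‖ ≥ r` on `Z` for some `r > 0`, so `ε = δ r` gives `f = g` on `Z`.

To compute `Newt f` from this representation, one needs that the Newton polytope does not depend
on the representation (`exponent_mem_hull`): an exponent of one representation lying outside the
hull of the exponents of the other would be separated from it by a direction `p`, and the two
functions would then grow at different rates along the ray `t p`.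
-/


noncomputable section

open Classical

/-- The embedding `ℤⁿ → ℝⁿ`. -/
abbrev latticeEmb {n : ℕ} : (Fin n → ℤ) → (Fin n → ℝ) := fun u i => (u i : ℝ)

lemma exists_vertex_ge {n : ℕ} (V : Finset (Fin n → ℤ)) (q p : Fin n → ℝ)
    (hq : q ∈ convexHull ℝ (latticeEmb '' (V : Set (Fin n → ℤ)))) :
    ∃ v ∈ V, ∑ i, q i * p i ≤ ∑ i, (v i : ℝ) * p i := by
  by_contra! h
  have hconv : Convex ℝ {x : Fin n → ℝ | ∑ i, x i * p i < ∑ i, q i * p i} := by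
    refine convex_halfSpace_lt (f := fun x : Fin n → ℝ => ∑ i, x i * p i) ⟨?_, ?_⟩ _
    · intro x y
      simp [add_mul, Finset.sum_add_distrib]
    · intro c x
      simp [mul_assoc, Finset.mul_sum]
  have hsub := convexHull_min (s := latticeEmb '' (V : Set (Fin n → ℤ))) (by
    rintro _ ⟨v, hv, rfl⟩
    exact h v hv) hconv
  exact lt_irrefl (∑ i, q i * p i) (hsub hq)

/-- If one tropical polynomial is pointwise at most another, then its exponents lie in the
Newton polytope of the other one. -/
lemma exponent_mem_hull {n : ℕ} (A B : Finset (ℝ × (Fin n → ℤ)))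
    (h : ∀ p : Fin n → ℝ,
      (A.sup fun t => ((t.1 + ∑ i, (t.2 i : ℝ) * p i : ℝ) : Trop)) ≤
        B.sup fun t => ((t.1 + ∑ i, (t.2 i : ℝ) * p i : ℝ) : Trop))
    (a : ℝ × (Fin n → ℤ)) (ha : a ∈ A) :
    latticeEmb a.2 ∈ convexHull ℝ
      (latticeEmb '' ((B.image Prod.snd : Finset (Fin n → ℤ)) : Set (Fin n → ℤ))) := by
  by_contra hn
  have hfin : (latticeEmb ''
      ((B.image Prod.snd : Finset (Fin n → ℤ)) : Set (Fin n → ℤ))).Finite :=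
    (Finset.finite_toSet _).image _
  obtain ⟨φ, s, hs, hs'⟩ := geometric_hahn_banach_closed_point
    (convex_convexHull ℝ _) (hfin.isClosed_convexHull ℝ) hn
  set p : Fin n → ℝ := fun i => φ (Pi.single i 1) with hp
  have hφ : ∀ x : Fin n → ℝ, φ x = ∑ i, x i * p i := by
    intro x
    conv_lhs => rw [pi_eq_sum_univ' x]
    simp only [map_sum, map_smul, smul_eq_mul, hp]
  set M : ℝ := ∑ b ∈ B, |b.1| with hM
  have hd : 0 < φ (latticeEmb a.2) - s := by linarith
  -- Beyond this parameter on the ray the gap in growth rates outweighs all coefficients.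
  set t : ℝ := (M + |a.1| + 1) / (φ (latticeEmb a.2) - s) with ht
  have hM0 : 0 ≤ M := Finset.sum_nonneg fun _ _ => abs_nonneg _
  have ht0 : 0 ≤ t := by positivity
  have htd : t * (φ (latticeEmb a.2) - s) = M + |a.1| + 1 := div_mul_cancel₀ _ hd.ne'
  have hray : ∀ u : Fin n → ℤ, ∑ i, (u i : ℝ) * (t • p) i = t * φ (latticeEmb u) := by
    intro u
    rw [hφ, Finset.mul_sum]
    refine Finset.sum_congr rfl fun i _ => ?_
    simp only [Pi.smul_apply, smul_eq_mul]
    ring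
  have hle := (Finset.le_sup (f := fun t' : ℝ × (Fin n → ℤ) =>
    ((t'.1 + ∑ i, (t'.2 i : ℝ) * (t • p) i : ℝ) : Trop)) ha).trans (h (t • p))
  obtain ⟨b, hb, hab⟩ := (Finset.le_sup_iff (WithBot.bot_lt_coe _)).1 hle
  have hab' := WithBot.coe_le_coe.1 hab
  rw [hray, hray] at hab'
  have hbs : φ (latticeEmb b.2) < s :=
    hs _ (subset_convexHull ℝ _ ⟨b.2, by
      exact Finset.mem_coe.2 (Finset.mem_image_of_mem _ hb), rfl⟩)
  have hbM : |b.1| ≤ M :=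
    Finset.single_le_sum (f := fun b : ℝ × (Fin n → ℤ) => |b.1|)
      (fun _ _ => abs_nonneg _) hb
  have h1 := mul_le_mul_of_nonneg_left hbs.le ht0
  have h2 := le_abs_self b.1
  have h3 := neg_abs_le a.1
  linarith [mul_sub t (φ (latticeEmb a.2)) s]

lemma newt_eq {n : ℕ} (f : TropFn n) (A : Finset (ℝ × (Fin n → ℤ)))
    (hA : ∀ p, f p = A.sup fun t => ((t.1 + ∑ i, (t.2 i : ℝ) * p i : ℝ) : Trop)) :
    Newt f = convexHull ℝ
      (latticeEmb '' ((A.image Prod.snd : Finset (Fin n → ℤ)) : Set (Fin n → ℤ))) := by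
  have hf : IsTropFcn f := ⟨A, hA⟩
  have hB := hf.choose_spec
  rw [Newt, dif_pos hf]
  apply Set.Subset.antisymm
  · refine convexHull_min ?_ (convex_convexHull ℝ _)
    rintro _ ⟨u, hu, rfl⟩
    obtain ⟨b, hb, rfl⟩ := Finset.mem_image.1 (Finset.mem_coe.1 hu)
    exact exponent_mem_hull _ A (fun p => ((hB p).symm.trans (hA p)).le) b hb
  · refine convexHull_min ?_ (convex_convexHull ℝ _)
    rintro _ ⟨u, hu, rfl⟩
    obtain ⟨b, hb, rfl⟩ := Finset.mem_image.1 (Finset.mem_coe.1 hu)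
    exact exponent_mem_hull A _ (fun p => ((hA p).symm.trans (hB p)).le) b hb

/-- Let `Z ⊆ ℝⁿ` be closed with `0 ∉ Z` and let `P` be an `n`-dimensional
lattice polytope with a lattice point in its interior.  Then there is a pair
`(f,g) ∈ 𝐄(Z)` with `f ≠ g` and `Newt f = P`. -/
theorem stmt7 (n : ℕ) (Z : Set (Fin n → ℝ)) (hZclosed : IsClosed Z)
    (h0 : (0 : Fin n → ℝ) ∉ Z)
    (V : Finset (Fin n → ℤ)) (P : Set (Fin n → ℝ))
    (hP : P = convexHull ℝ
      ((fun u : Fin n → ℤ => fun i => (u i : ℝ)) '' (V : Set (Fin n → ℤ))))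
    (hdim : affineSpan ℝ P = ⊤)
    (hint : ∃ w : Fin n → ℤ, (fun i => (w i : ℝ)) ∈ interior P) :
    ∃ f g : TropFn n, IsTropFcn f ∧ IsTropFcn g ∧ (∀ p ∈ Z, f p = g p) ∧
      f ≠ g ∧ Newt f = P := by
  obtain ⟨w, hw⟩ := hint
  obtain ⟨δ, hδ, hball⟩ := Metric.mem_nhds_iff.1 (mem_interior_iff_mem_nhds.1 hw)
  obtain ⟨r, hr, hrZ⟩ := Metric.mem_nhds_iff.1 (hZclosed.isOpen_compl.mem_nhds h0)
  set A : Finset (ℝ × (Fin n → ℤ)) := V.image fun v => ((0 : ℝ), v) with hA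
  -- The open ball only contains the closed ball of radius `δ / 2`.
  set ε : ℝ := δ / 2 * r with hε
  have hε0 : 0 < ε := by positivity
  have hgrow : ∀ p ∈ Z, ∃ v ∈ V,
      ε + ∑ i, (w i : ℝ) * p i ≤ ∑ i, (v i : ℝ) * p i := by
    intro p hpZ
    have hpr : ∃ j, r ≤ |p j| := by
      by_contra! hlt
      have : p ∈ Metric.ball (0 : Fin n → ℝ) r := by
        rw [mem_ball_zero_iff, pi_norm_lt_iff hr]
        exact hlt
      exact hrZ this hpZ
    obtain ⟨j, hj⟩ := hpr
    set q : Fin n → ℝ := latticeEmb w + Pi.single j (δ / 2 * SignType.sign (p j)) with hq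
    have hqP : q ∈ P := by
      apply hball
      rw [mem_ball_iff_norm, hq, add_sub_cancel_left, Pi.norm_single, norm_mul,
        Real.norm_of_nonneg (by positivity : 0 ≤ δ / 2)]
      have hs : ‖((SignType.sign (p j) : SignType) : ℝ)‖ ≤ 1 := by
        cases SignType.sign (p j) <;> simp
      nlinarith
    obtain ⟨v, hv, hle⟩ := exists_vertex_ge V q p (hP ▸ hqP)
    refine ⟨v, hv, le_trans ?_ hle⟩
    have hsum : ∑ i, q i * p i = ∑ i, (w i : ℝ) * p i + δ / 2 * |p j| := by
      simp only [hq, Pi.add_apply, add_mul, Finset.sum_add_distrib]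
      congr 1
      rw [Finset.sum_eq_single j]
      · rw [Pi.single_eq_same, mul_assoc, sign_mul_self]
      · intro i _ hij
        simp [hij]
      · simp
    rw [hsum]
    have := mul_le_mul_of_nonneg_left hj (by positivity : 0 ≤ δ / 2)
    linarith
  refine ⟨fun p => A.sup fun t => ((t.1 + ∑ i, (t.2 i : ℝ) * p i : ℝ) : Trop),
    fun p => (insert (ε, w) A).sup fun t => ((t.1 + ∑ i, (t.2 i : ℝ) * p i : ℝ) : Trop),
    ⟨A, fun _ => rfl⟩, ⟨insert (ε, w) A, fun _ => rfl⟩, ?_, ?_, ?_⟩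
  · intro p hpZ
    obtain ⟨v, hv, hle⟩ := hgrow p hpZ
    simp only [Finset.sup_insert]
    refine (sup_eq_right.2 ?_).symm
    have hvA : ((0 : ℝ), v) ∈ A := Finset.mem_image_of_mem _ hv
    refine le_trans ?_ (Finset.le_sup (f := fun t : ℝ × (Fin n → ℤ) =>
      ((t.1 + ∑ i, (t.2 i : ℝ) * p i : ℝ) : Trop)) hvA)
    exact WithBot.coe_le_coe.2 (by simpa using hle)
  · intro hfg
    have h := congrFun hfg 0
    simp only [Finset.sup_insert] at h
    have hle := sup_eq_right.1 h.symm
    obtain ⟨b, hb, hab⟩ := (Finset.le_sup_iff (WithBot.bot_lt_coe _)).1 hle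
    obtain ⟨v, -, rfl⟩ := Finset.mem_image.1 hb
    have hab' := WithBot.coe_le_coe.1 hab
    simp at hab'
    linarith
  · rw [newt_eq _ A fun _ => rfl, hP]
    congr 2
    simp [hA, Finset.image_image, Function.comp_def]
end
end

section
/- Let n ≥ 2 and let N ≥ 3 be an integer. Let M(n,N) be the n × n integer matrix whose first row is (N−1, N², N³, …, Nⁿ), whose second row is (1, N+1, 0, …, 0), and whose i-th row for 3 ≤ i ≤ n is the i-th standard basis vector. Let d₁, …, dₙ ∈ ℤⁿ be the columns of M(n,N) and let P₁ = {λ₁d₁ + ⋯ + λₙdₙ : 0 ≤ λᵢ ≤ 2 for all i} ⊆ ℝⁿ. Then for any two distinct lattice points p, q ∈ P₁ ∩ ℤⁿ, the Euclidean distance satisfies ‖p − q‖ ≥ N − 2. -/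
/-!
Write `p - q = M μ`, so that every real coefficient `μ j` lies in `[-2, 2]`. All `μ j` are integers:
rows `i ≥ 3` read off `μ i` directly, and the top left `2 × 2` block has determinant `-1`.

If `μ₂ ≠ 0`, the second coordinate `μ₁ + (N + 1) μ₂` has absolute value at least `N - 1`.
If `μ₂ = 0`, the first coordinate is `(N - 1) μ₁ + N³ s` with `s = ∑ Nⁱ μ_{i+3}`. For `s ≠ 0` its
absolute value is at least `N³ - 2 (N - 1)`; for `s = 0` all these digits vanish, since digits of
absolute value at most `2` are zero as soon as they are divisible by the base `N ≥ 3`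
(`digits_eq_zero`), and then `μ₁ ≠ 0` gives at least `N - 1`.
-/

noncomputable section

/-- An integer with base-`N` digits in `[-2, 2]`, where `N ≥ 3`, vanishes only if all digits do:
the lowest digit is divisible by `N`, hence zero, and the value can be divided by `N`. -/
theorem digits_eq_zero (N : ℤ) (hN : 3 ≤ N) : ∀ (k : ℕ) (c : Fin k → ℤ), (∀ i, |c i| ≤ 2) →
    ∑ i : Fin k, N ^ (i : ℕ) * c i = 0 → ∀ i, c i = 0 := by
  intro k
  induction k with
  | zero => intro c _ _ i; exact i.elim0
  | succ k ih =>
    intro c hc hs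
    rw [Fin.sum_univ_succ] at hs
    have hfac : ∑ i : Fin k, N ^ ((i.succ : Fin (k + 1)) : ℕ) * c i.succ
        = N * ∑ i : Fin k, N ^ (i : ℕ) * c i.succ := by
      rw [Finset.mul_sum]
      refine Finset.sum_congr rfl fun i _ => ?_
      rw [Fin.val_succ]; ring
    rw [hfac] at hs
    simp only [Fin.val_zero, pow_zero, one_mul] at hs
    have h0 : c 0 = 0 := by
      apply Int.eq_zero_of_abs_lt_dvd (m := N)
      · exact ⟨-∑ i : Fin k, N ^ (i : ℕ) * c i.succ, by linarith⟩
      · linarith [hc 0]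
    have hs' : ∑ i : Fin k, N ^ (i : ℕ) * c i.succ = 0 := by
      rw [h0, zero_add] at hs
      exact (mul_eq_zero.mp hs).resolve_left (by omega)
    have := ih (fun i => c i.succ) (fun i => hc _) hs'
    intro i
    exact Fin.cases h0 this i

/-- One of the first two coordinates of `M μ` is large, for a nonzero integer vector
`μ = (a, b, c)` with entries in `[-2, 2]`. -/
theorem coord_large (N : ℤ) (hN : 3 ≤ N) (k : ℕ) (a b : ℤ) (c : Fin k → ℤ)
    (ha : |a| ≤ 2) (hc : ∀ i, |c i| ≤ 2)
    (hne : ¬ (a = 0 ∧ b = 0 ∧ ∀ i, c i = 0)) :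
    N - 2 ≤ |(N - 1) * a + N ^ 2 * b + N ^ 3 * ∑ i : Fin k, N ^ (i : ℕ) * c i| ∨
      N - 2 ≤ |a + (N + 1) * b| := by
  obtain ⟨ha1, ha2⟩ := abs_le.mp ha
  rcases lt_trichotomy b 0 with hb | hb | hb
  · right
    exact le_trans (by nlinarith) (neg_le_abs _)
  · left
    subst hb
    have hN3 : 9 * N ≤ N ^ 3 := by nlinarith [mul_nonneg (by omega : 0 ≤ N) (by omega : 0 ≤ N - 3)]
    rcases lt_trichotomy (∑ i : Fin k, N ^ (i : ℕ) * c i) 0 with hs | hs | hs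
    · exact le_trans (by nlinarith) (neg_le_abs _)
    · have hc0 := digits_eq_zero N hN k c hc hs
      rcases lt_trichotomy a 0 with h | h | h
      · rw [hs]
        exact le_trans (by nlinarith) (neg_le_abs _)
      · exact absurd ⟨h, rfl, hc0⟩ hne
      · rw [hs]
        exact le_trans (by nlinarith) (le_abs_self _)
    · exact le_trans (by nlinarith) (le_abs_self _)
  · right
    exact le_trans (by nlinarith) (le_abs_self _)

/-- Let `n ≥ 2`, `N ≥ 3`, and let `M(n,N)` be the integer matrix with first
row `(N-1, N², …, Nⁿ)`, second row `(1, N+1, 0, …, 0)` and `i`-th row the `i`-th standard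
basis vector for `i ≥ 3`.  Let `P₁` be the parallelotope `{∑ λⱼ dⱼ : 0 ≤ λⱼ ≤ 2}` spanned by
the columns `dⱼ` of `M(n,N)`.  Then any two distinct lattice points of `P₁` are at Euclidean
distance at least `N - 2`. -/
theorem stmt8 (n N : ℕ) (hn : 2 ≤ n) (hN : 3 ≤ N)
    (M : Matrix (Fin n) (Fin n) ℤ)
    (hM : ∀ i j : Fin n, M i j =
      if (i : ℕ) = 0 then
        (if (j : ℕ) = 0 then (N : ℤ) - 1 else (N : ℤ) ^ ((j : ℕ) + 1))
      else if (i : ℕ) = 1 then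
        (if (j : ℕ) = 0 then 1 else if (j : ℕ) = 1 then (N : ℤ) + 1 else 0)
      else (if i = j then 1 else 0))
    (P₁ : Set (Fin n → ℝ))
    (hP₁ : P₁ = {x | ∃ lam : Fin n → ℝ, (∀ j, 0 ≤ lam j ∧ lam j ≤ 2) ∧
        ∀ i, x i = ∑ j, lam j * (M i j : ℝ)})
    (p q : Fin n → ℝ) (hp : p ∈ P₁) (hq : q ∈ P₁)
    (hpz : ∀ i, ∃ z : ℤ, p i = z) (hqz : ∀ i, ∃ z : ℤ, q i = z)
    (hne : p ≠ q) :
    (N : ℝ) - 2 ≤ Real.sqrt (∑ i, (p i - q i) ^ 2) := by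
  subst hP₁
  obtain ⟨lp, hlp, hp⟩ := hp
  obtain ⟨lq, hlq, hq⟩ := hq
  obtain ⟨k, rfl⟩ : ∃ k, n = k + 2 := ⟨n - 2, by omega⟩
  choose zp hzp using hpz
  choose zq hzq using hqz
  set μ : Fin (k + 2) → ℝ := fun j => lp j - lq j with hμ
  have hμb : ∀ j, |μ j| ≤ 2 := fun j => by
    have h1 := hlp j
    have h2 := hlq j
    rw [abs_le]
    constructor <;> simp only [hμ] <;> linarith
  have hd : ∀ i, p i - q i = ∑ j, μ j * (M i j : ℝ) := fun i => by
    rw [hp i, hq i, ← Finset.sum_sub_distrib]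
    exact Finset.sum_congr rfl fun j _ => by simp only [hμ]; ring
  have hdz : ∀ i, p i - q i = ((zp i - zq i : ℤ) : ℝ) := fun i => by
    rw [hzp i, hzq i]; push_cast; ring
  -- the three kinds of rows of `M`
  have e0 : p 0 - q 0 = (N - 1) * μ 0 + N ^ 2 * μ 1
      + N ^ 3 * ∑ i : Fin k, (N : ℝ) ^ (i : ℕ) * μ i.succ.succ := by
    rw [hd 0, Fin.sum_univ_succ, Fin.sum_univ_succ, Finset.mul_sum]
    simp only [hM]
    simp
    rw [← add_assoc]
    congr 1
    · ring
    · exact Finset.sum_congr rfl fun i _ => by ring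
  have e1 : p 1 - q 1 = μ 0 + (N + 1) * μ 1 := by
    rw [hd 1, Fin.sum_univ_succ, Fin.sum_univ_succ]
    simp only [hM]
    simp
    ring
  have e2 : ∀ i : Fin k, p i.succ.succ - q i.succ.succ = μ i.succ.succ := fun i => by
    rw [hd]
    simp only [hM]
    simp
  set c : Fin k → ℤ := fun i => zp i.succ.succ - zq i.succ.succ with hcdef
  have hc : ∀ i, μ i.succ.succ = (c i : ℝ) := fun i => by rw [← e2, hdz]
  set S : ℤ := ∑ i : Fin k, (N : ℤ) ^ (i : ℕ) * c i with hS
  have hSr : ∑ i : Fin k, (N : ℝ) ^ (i : ℕ) * μ i.succ.succ = (S : ℝ) := by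
    rw [hS]; push_cast
    exact Finset.sum_congr rfl fun i _ => by rw [hc]
  rw [hSr] at e0
  -- inverting the top left block, whose determinant is `-1`
  obtain ⟨b, hb⟩ : ∃ b : ℤ, μ 1 = b :=
    ⟨(zp 0 - zq 0) - N ^ 3 * S - (N - 1) * (zp 1 - zq 1), by
      have h0 := hdz 0
      have h1 := hdz 1
      push_cast at h0 h1 ⊢
      rw [← h0, ← h1, e0, e1]; ring⟩
  obtain ⟨a, ha⟩ : ∃ a : ℤ, μ 0 = a :=
    ⟨(zp 1 - zq 1) - (N + 1) * b, by
      have h1 := hdz 1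
      push_cast at h1 ⊢
      rw [← h1, e1, ← hb]; ring⟩
  have hne' : ¬ (a = 0 ∧ b = 0 ∧ ∀ i, c i = 0) := by
    rintro ⟨h1, h2, h3⟩
    apply hne
    have hz : ∀ j, μ j = 0 := by
      intro j
      refine Fin.cases ?_ (fun j => ?_) j
      · rw [ha, h1, Int.cast_zero]
      · refine Fin.cases ?_ (fun j => ?_) j
        · exact hb.trans (by rw [h2, Int.cast_zero])
        · rw [hc, h3, Int.cast_zero]
    funext i
    have := hd i
    simp only [hz, zero_mul, Finset.sum_const_zero] at this
    linarith
  have hab : |a| ≤ 2 := by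
    have := hμb 0
    rw [ha] at this
    exact_mod_cast this
  have hcb : ∀ i, |c i| ≤ 2 := fun i => by
    have := hμb i.succ.succ
    rw [hc] at this
    exact_mod_cast this
  have hcoord : ∀ i, (N : ℝ) - 2 ≤ |p i - q i| →
      (N : ℝ) - 2 ≤ Real.sqrt (∑ i, (p i - q i) ^ 2) := fun i hi =>
    hi.trans (Real.abs_le_sqrt
      (Finset.single_le_sum (f := fun i => (p i - q i) ^ 2) (fun j _ => sq_nonneg _)
        (Finset.mem_univ i)))
  rcases coord_large N (by exact_mod_cast hN) k a b c hab hcb hne' with h | h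
  · apply hcoord 0
    rw [e0, ha, hb]
    exact_mod_cast h
  · apply hcoord 1
    rw [e1, ha, hb]
    exact_mod_cast h
end
end

section
/- Let n ≥ 2 and let N be a positive integer. Then there exists an n-dimensional lattice polytope P ⊆ ℝⁿ (the convex hull of a finite subset of ℤⁿ, of affine dimension n) such that (1) P contains a lattice point in its topological interior, and (2) for any two distinct lattice points p, q ∈ P ∩ ℤⁿ, the Euclidean distance satisfies ‖p − q‖ > N. -/
noncomputable section

/-!
For a unimodular integer matrix `A`, the parallelotope `A '' [-1, 1]ⁿ` is a lattice polytope with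
the lattice point `0` in its interior, and its lattice points are exactly the `A x` with
`x ∈ {-1, 0, 1}ⁿ`. Differences of lattice points are therefore of the form `A d` with
`d ∈ {-2, …, 2}ⁿ`, and it suffices to find `A` making every nonzero such `A d` long
(`exists_unimodular_long`).

Such an `A` is a product of two shears. The first replaces `d₀` by `s = ∑ 5 ^ i * dᵢ`, which is
nonzero by uniqueness of balanced base-5 expansions (`eq_zero_of_base_five`). The second replaces
`d₁` by `d₁ + (N + 3) s`, whose absolute value is at least `(N + 3) - 2 > N`.
-/

/-- Uniqueness of the balanced base-5 expansion of `0`. -/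
lemma eq_zero_of_base_five : ∀ (n : ℕ) (d : Fin n → ℤ), (∀ i, |d i| ≤ 2) →
    ∑ i : Fin n, 5 ^ (i : ℕ) * d i = 0 → d = 0
  | 0, d, _, _ => Subsingleton.elim _ _
  | n + 1, d, hd, h => by
    rw [Fin.sum_univ_succ] at h
    have e : ∑ i : Fin n, (5 : ℤ) ^ ((i.succ : Fin (n + 1)) : ℕ) * d i.succ
        = 5 * ∑ i : Fin n, 5 ^ (i : ℕ) * d i.succ := by
      rw [Finset.mul_sum]
      refine Finset.sum_congr rfl fun i _ => ?_
      rw [Fin.val_succ, pow_succ]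
      ring
    rw [e] at h
    simp only [Fin.val_zero, pow_zero, one_mul] at h
    have h0 := abs_le.1 (hd 0)
    have hd0 : d 0 = 0 := by omega
    have ih := eq_zero_of_base_five n (fun i => d i.succ) (fun i => hd _) (by omega)
    funext i
    refine Fin.cases hd0 (fun j => ?_) i
    exact congrFun ih j

/-- A unimodular integer matrix that sends every nonzero vector of `{-2, …, 2}ⁿ` to a vector with
a coordinate larger than `N` in absolute value. -/
lemma exists_unimodular_long (m N : ℕ) : ∃ A : Matrix (Fin (m + 2)) (Fin (m + 2)) ℤ, A.det = 1 ∧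
    ∀ d : Fin (m + 2) → ℤ, (∀ i, |d i| ≤ 2) → d ≠ 0 → ∃ i, (N : ℤ) < |(A.mulVec d) i| := by
  let S : Matrix (Fin (m + 2)) (Fin (m + 2)) ℤ :=
    Matrix.updateRow 1 0 (fun i => 5 ^ (i : ℕ))
  have hS : S.det = 1 := by
    rw [Matrix.det_of_isUpperTriangular]
    · refine Finset.prod_eq_one fun i _ => ?_
      by_cases hi : i = 0
      · subst hi; simp [S]
      · simp [S, Matrix.updateRow_apply, hi]
    · intro i j hij
      have hij' : j < i := hij
      have hi : i ≠ 0 := (lt_of_le_of_lt (Fin.zero_le j) hij').ne'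
      simp [S, Matrix.updateRow_apply, hi, Matrix.one_apply_ne hij'.ne']
  refine ⟨Matrix.transvection 1 0 ((N : ℤ) + 3) * S, ?_, ?_⟩
  · rw [Matrix.det_mul, hS, Matrix.det_transvection_of_ne _ _ (by simp)]; rfl
  · intro d hd hne
    refine ⟨1, ?_⟩
    have hs0 : S.mulVec d 0 = ∑ i : Fin (m + 2), 5 ^ (i : ℕ) * d i := by
      simp [S, Matrix.mulVec, dotProduct]
    have hs1 : S.mulVec d 1 = d 1 := by
      simp [S, Matrix.mulVec, dotProduct, Matrix.updateRow_apply, Matrix.one_apply]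
    have hs : S.mulVec d 0 ≠ 0 := fun h =>
      hne (eq_zero_of_base_five _ d hd (hs0 ▸ h))
    have key : (Matrix.transvection 1 0 ((N : ℤ) + 3) * S).mulVec d 1
        = d 1 + (N + 3) * S.mulVec d 0 := by
      rw [← Matrix.mulVec_mulVec, Matrix.transvection, Matrix.add_mulVec, Matrix.one_mulVec,
        Pi.add_apply, hs1, Matrix.single_mulVec]
      simp
    rw [key]
    have h1 := abs_le.1 (hd 1)
    rw [lt_abs]
    rcases lt_or_gt_of_ne hs with h | h
    · right; nlinarith
    · left; nlinarith

/-- The cube `[-1, 1]ⁿ` is the convex hull of its lattice points. -/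
lemma convexHull_lattice_cube (n : ℕ) :
    convexHull ℝ ((fun u : Fin n → ℤ => fun i => (u i : ℝ)) '' Set.Icc (-1) 1)
      = Set.Icc (-1) 1 := by
  apply Set.Subset.antisymm
  · refine convexHull_min ?_ (convex_Icc _ _)
    rintro _ ⟨u, ⟨h1, h2⟩, rfl⟩
    refine ⟨fun i => ?_, fun i => ?_⟩
    · have := h1 i; simp at this ⊢; exact_mod_cast this
    · have := h2 i; simp at this ⊢; exact_mod_cast this
  · have h : (Set.univ.pi fun _ : Fin n => ({-1, 1} : Set ℝ)) ⊆
        (fun u : Fin n → ℤ => fun i => (u i : ℝ)) '' Set.Icc (-1) 1 := by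
      intro x hx
      have : ∀ i, ∃ z : ℤ, (-1 ≤ z ∧ z ≤ 1) ∧ (z : ℝ) = x i := by
        intro i
        rcases hx i trivial with h | h
        · exact ⟨-1, by simp, by rw [h]; simp⟩
        · exact ⟨1, by simp, by rw [h]; simp⟩
      choose u hu using this
      exact ⟨u, ⟨fun i => (hu i).1.1, fun i => (hu i).1.2⟩, funext fun i => (hu i).2⟩
    refine subset_trans ?_ (convexHull_mono h)
    rw [convexHull_pi]
    intro x hx i _
    rw [convexHull_pair, segment_eq_Icc (by norm_num)]
    exact ⟨hx.1 i, hx.2 i⟩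

/-- For `n ≥ 2` and any positive integer `N` there is an `n`-dimensional
lattice polytope `P ⊆ ℝⁿ` with a lattice point in its interior such that any two distinct
lattice points of `P` are at Euclidean distance greater than `N`. -/
theorem stmt9 (n : ℕ) (hn : 2 ≤ n) (N : ℕ) (hN : 1 ≤ N) :
    ∃ (V : Finset (Fin n → ℤ)) (P : Set (Fin n → ℝ)),
      P = convexHull ℝ
        ((fun u : Fin n → ℤ => fun i => (u i : ℝ)) '' (V : Set (Fin n → ℤ))) ∧
      affineSpan ℝ P = ⊤ ∧
      (∃ w : Fin n → ℤ, (fun i => (w i : ℝ)) ∈ interior P) ∧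
      ∀ p q : Fin n → ℝ, p ∈ P → q ∈ P →
        (∀ i, ∃ z : ℤ, p i = z) → (∀ i, ∃ z : ℤ, q i = z) → p ≠ q →
        (N : ℝ) < Real.sqrt (∑ i, (p i - q i) ^ 2) := by
  obtain ⟨m, rfl⟩ := Nat.exists_eq_add_of_le' hn
  obtain ⟨A, hdet, hA⟩ := exists_unimodular_long m N
  set c : (Fin (m + 2) → ℤ) → (Fin (m + 2) → ℝ) := fun u i => (u i : ℝ) with hc
  have hunit : IsUnit A.det := by simp [hdet]
  let AR : Matrix (Fin (m + 2)) (Fin (m + 2)) ℝ := A.map (Int.cast : ℤ → ℝ)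
  let BR : Matrix (Fin (m + 2)) (Fin (m + 2)) ℝ := A⁻¹.map (Int.cast : ℤ → ℝ)
  have hAB : AR * BR = 1 := by
    have := congrArg (Int.castRingHom ℝ).mapMatrix (Matrix.mul_nonsing_inv A hunit)
    rwa [map_mul, map_one] at this
  have hBA : BR * AR = 1 := by
    have := congrArg (Int.castRingHom ℝ).mapMatrix (Matrix.nonsing_inv_mul A hunit)
    rwa [map_mul, map_one] at this
  have hcA : ∀ u, AR.mulVec (c u) = c (A.mulVec u) := by
    intro u; funext i; simp [AR, c, Matrix.mulVec, dotProduct]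
  have hcB : ∀ u, BR.mulVec (c u) = c (A⁻¹.mulVec u) := by
    intro u; funext i; simp [BR, c, Matrix.mulVec, dotProduct]
  let L : (Fin (m + 2) → ℝ) ≃L[ℝ] (Fin (m + 2) → ℝ) :=
    (Matrix.toLin'OfInv hAB hBA).symm.toContinuousLinearEquiv
  have hL : ∀ x, L x = AR.mulVec x := by
    intro x; rfl
  have hinterior : (0 : Fin (m + 2) → ℝ) ∈ interior (L '' Set.Icc (-1) 1) := by
    have h0 : (0 : Fin (m + 2) → ℝ) ∈ interior (Set.Icc (-1 : Fin (m + 2) → ℝ) 1) := by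
      rw [← Set.pi_univ_Icc, interior_pi_set Set.finite_univ]
      intro i _
      simp
    have := Set.mem_image_of_mem L h0
    have hi := L.toHomeomorph.image_interior (Set.Icc (-1) 1)
    rw [ContinuousLinearEquiv.coe_toHomeomorph] at hi
    rwa [hi, map_zero] at this
  have hP : L '' Set.Icc (-1) 1 = convexHull ℝ (c ''
      ((Finset.Icc (-1) 1).image A.mulVec : Finset (Fin (m + 2) → ℤ))) := by
    rw [← convexHull_lattice_cube, ← ContinuousLinearEquiv.coe_toLinearEquiv,
      ← LinearEquiv.coe_coe, LinearMap.image_convexHull]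
    congr 1
    rw [Finset.coe_image, Finset.coe_Icc, Set.image_image, Set.image_image]
    exact Set.image_congr fun u _ => hcA u
  -- a lattice point of the parallelotope comes from a lattice point of the cube, as `A⁻¹` is integral
  have hlat : ∀ p ∈ L '' Set.Icc (-1) 1, (∀ i, ∃ z : ℤ, p i = z) →
      ∃ u : Fin (m + 2) → ℤ, (∀ i, |u i| ≤ 1) ∧ p = c (A.mulVec u) := by
    rintro _ ⟨x, hx, rfl⟩ hz
    choose z hz using hz
    have hz' : L x = c z := funext hz
    have hxz : x = c (A⁻¹.mulVec z) := by
      rw [← hcB, ← hz', hL, Matrix.mulVec_mulVec, hBA, Matrix.one_mulVec]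
    refine ⟨A⁻¹.mulVec z, fun i => ?_, ?_⟩
    · have h1 := hx.1 i
      have h2 := hx.2 i
      rw [hxz] at h1 h2
      simp only [hc, Pi.neg_apply, Pi.one_apply] at h1 h2
      rw [abs_le]
      exact ⟨by exact_mod_cast h1, by exact_mod_cast h2⟩
    · rw [← hcA, ← hxz, hL]
  refine ⟨(Finset.Icc (-1) 1).image A.mulVec, L '' Set.Icc (-1) 1, hP, ?_, ⟨0, ?_⟩, ?_⟩
  · refine affineSpan_eq_top_of_nonempty_interior ⟨0, ?_⟩
    exact interior_mono (subset_convexHull ℝ _) hinterior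
  · convert hinterior using 1
    funext i; simp
  · intro p q hp hq hpz hqz hpq
    obtain ⟨u, hu, rfl⟩ := hlat p hp hpz
    obtain ⟨v, hv, rfl⟩ := hlat q hq hqz
    have hne : u - v ≠ 0 := by
      intro h
      exact hpq (by rw [sub_eq_zero.1 h])
    obtain ⟨i, hi⟩ := hA (u - v) (fun i => by
      have h1 := abs_le.1 (hu i)
      have h2 := abs_le.1 (hv i)
      rw [Pi.sub_apply, abs_le]
      constructor <;> linarith) hne
    rw [Matrix.mulVec_sub, Pi.sub_apply] at hi
    have hi' : (N : ℝ) < |c (A.mulVec u) i - c (A.mulVec v) i| := by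
      simp only [hc]; exact_mod_cast hi
    refine hi'.trans_le (Real.abs_le_sqrt ?_)
    exact Finset.single_le_sum (f := fun i => (c (A.mulVec u) i - c (A.mulVec v) i) ^ 2)
      (fun j _ => sq_nonneg _) (Finset.mem_univ i)
end
end

section
/- Let W be a d-dimensional rational linear subspace of ℝⁿ, let {q₁,…,q_d} be a ℤ-basis of the free abelian group W ∩ ℤⁿ, and let ι : ℝᵈ → ℝⁿ be the injective linear map (c₁,…,c_d) ↦ c₁q₁ + ⋯ + c_d q_d, whose image is W. Then the pull-back semiring homomorphism ι* : 𝕋[x₁^±,…,xₙ^±]_fcn → 𝕋[y₁^±,…,y_d^±]_fcn, f ↦ f ∘ ι, is surjective. -/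
/-!
Pulling back the monomial `xᵘ` along `ι` gives the monomial `yʷ` with `wᵢ = u · qᵢ`, so it is
enough that every `w ∈ ℤᵈ` has the form `(u · q₁, …, u · q_d)` for some `u ∈ ℤⁿ`; a preimage of a
tropical polynomial is then found term by term, with the same coefficients.

The lattice `W ∩ ℤⁿ` is saturated in `ℤⁿ`, since `W` is a real subspace. Hence the quotient
`ℤⁿ / (W ∩ ℤⁿ)` is finitely generated and torsion-free, so free, so the inclusion
`ℤᵈ ≅ W ∩ ℤⁿ ⊆ ℤⁿ` has a `ℤ`-linear left inverse (`exists_retraction`). Composing this left inverse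
with `w`, regarded as a functional on `ℤᵈ`, produces `u` (`exists_pairing_eq`).
-/

noncomputable section

/-- An injective map of `ℤ`-lattices with saturated image has a `ℤ`-linear left inverse. -/
theorem exists_retraction {n d : ℕ} (Q : (Fin d → ℤ) →ₗ[ℤ] (Fin n → ℤ))
    (hQ : Function.Injective Q)
    (hsat : ∀ (m : ℤ) (v : Fin n → ℤ), m ≠ 0 → m • v ∈ LinearMap.range Q →
      v ∈ LinearMap.range Q) :
    ∃ r : (Fin n → ℤ) →ₗ[ℤ] (Fin d → ℤ), ∀ c, r (Q c) = c := by
  set L := LinearMap.range Q with hL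
  have htf : Module.IsTorsionFree ℤ ((Fin n → ℤ) ⧸ L) := by
    refine Module.IsTorsionFree.of_smul_eq_zero fun m x hx => ?_
    obtain ⟨v, rfl⟩ := L.mkQ_surjective x
    by_cases hm : m = 0
    · exact Or.inl hm
    · right
      rw [← map_smul, Submodule.mkQ_apply, Submodule.Quotient.mk_eq_zero] at hx
      rw [Submodule.mkQ_apply, Submodule.Quotient.mk_eq_zero]
      exact hsat m v hm hx
  obtain ⟨s, hs⟩ := Module.projective_lifting_property L.mkQ LinearMap.id L.mkQ_surjective
  -- `v ↦ v - s [v]` is a projection of `ℤⁿ` onto `L`.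
  have hp : ∀ v, ((LinearMap.id : (Fin n → ℤ) →ₗ[ℤ] (Fin n → ℤ)) - s ∘ₗ L.mkQ) v ∈ L := fun v => by
    rw [← Submodule.Quotient.mk_eq_zero, ← Submodule.mkQ_apply]
    have := LinearMap.congr_fun hs (L.mkQ v)
    simp only [LinearMap.comp_apply, LinearMap.id_apply] at this
    simp only [LinearMap.sub_apply, LinearMap.comp_apply, LinearMap.id_apply, map_sub, this,
      sub_self]
  refine ⟨(LinearEquiv.ofInjective Q hQ).symm.toLinearMap ∘ₗ LinearMap.codRestrict L _ hp,
    fun c => ?_⟩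
  have h0 : L.mkQ (Q c) = 0 := by
    rw [Submodule.mkQ_apply, Submodule.Quotient.mk_eq_zero]
    exact ⟨c, rfl⟩
  simp only [LinearMap.comp_apply, LinearEquiv.coe_coe]
  rw [LinearEquiv.symm_apply_eq]
  apply Subtype.ext
  simp only [LinearMap.codRestrict_apply, LinearMap.sub_apply, LinearMap.comp_apply,
    LinearMap.id_apply, h0, map_zero, sub_zero, LinearEquiv.ofInjective_apply]

/-- Every integer vector `w` is the vector of pairings of some `u ∈ ℤⁿ` with a `ℤ`-basis of
`W ∩ ℤⁿ`. -/
theorem exists_pairing_eq {n d : ℕ} (W : Submodule ℝ (Fin n → ℝ)) (q : Fin d → (Fin n → ℤ))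
    (hqW : ∀ i, (fun j => (q i j : ℝ)) ∈ W)
    (hbasis : ∀ v : Fin n → ℤ, (fun j => (v j : ℝ)) ∈ W →
      ∃! c : Fin d → ℤ, v = ∑ i, c i • q i) (w : Fin d → ℤ) :
    ∃ u : Fin n → ℤ, ∀ i, ∑ j, u j * q i j = w i := by
  set Q : (Fin d → ℤ) →ₗ[ℤ] (Fin n → ℤ) := Fintype.linearCombination ℤ q with hQdef
  have hQ : ∀ c, Q c = ∑ i, c i • q i := fun c => Fintype.linearCombination_apply ℤ q c
  have hmem : ∀ c, (fun j => ((Q c) j : ℝ)) ∈ W := fun c => by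
    have : (fun j => ((Q c) j : ℝ)) = ∑ i, (c i : ℝ) • (fun j => (q i j : ℝ)) := by
      ext j
      simp [hQ]
    rw [this]
    exact W.sum_mem fun i _ => W.smul_mem _ (hqW i)
  have hinj : Function.Injective Q := fun c c' h =>
    (hbasis (Q c) (hmem c)).unique (hQ c) (h.trans (hQ c'))
  obtain ⟨r, hr⟩ := exists_retraction Q hinj (by
    rintro m v hm ⟨c, hc⟩
    have hv : (fun j => (v j : ℝ)) ∈ W := by
      have h1 := W.smul_mem ((m : ℝ)⁻¹) (hmem c)
      rw [hc] at h1
      convert h1 using 1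
      ext j
      have : (m : ℝ) ≠ 0 := by exact_mod_cast hm
      simp [this]
    obtain ⟨b, hb, -⟩ := hbasis v hv
    exact ⟨b, (hQ b).trans hb.symm⟩)
  set φ : (Fin n → ℤ) →ₗ[ℤ] ℤ := Fintype.linearCombination ℤ w ∘ₗ r with hφ
  refine ⟨fun j => φ (Pi.single j 1), fun i => ?_⟩
  have hqi : q i = Q (Pi.single i 1) := by
    simp [hQdef]
  have h1 : φ (q i) = w i := by
    rw [hqi, hφ, LinearMap.comp_apply, hr]
    simp
  rw [← h1, LinearMap.pi_apply_eq_sum_univ φ (q i)]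
  refine Finset.sum_congr rfl fun j _ => ?_
  rw [smul_eq_mul, mul_comm]
  refine congrArg (q i j * ·) ?_
  refine congrArg φ (funext fun k => ?_)
  simp [Pi.single_apply, eq_comm]

/-- For a `d`-dimensional rational linear subspace `W ⊆ ℝⁿ` with a
`ℤ`-basis `q₁,…,q_d` of `W ∩ ℤⁿ` and `ι : ℝᵈ → ℝⁿ`, `c ↦ ∑ cᵢ qᵢ`, the pull-back
`ι* : f ↦ f ∘ ι` from tropical Laurent polynomial functions on `ℝⁿ` to those on `ℝᵈ`
is surjective. -/
theorem stmt10 (n d : ℕ)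
    (W : Submodule ℝ (Fin n → ℝ))
    (hrat : ∃ s : Set (Fin n → ℤ),
      W = Submodule.span ℝ ((fun u : Fin n → ℤ => fun i => (u i : ℝ)) '' s))
    (hdim : Module.finrank ℝ W = d)
    (q : Fin d → (Fin n → ℤ))
    (hqW : ∀ i, (fun j => (q i j : ℝ)) ∈ W)
    (hbasis : ∀ v : Fin n → ℤ, (fun j => (v j : ℝ)) ∈ W →
      ∃! c : Fin d → ℤ, v = ∑ i, c i • q i)
    (ι : (Fin d → ℝ) → (Fin n → ℝ))
    (hι : ∀ c, ι c = ∑ i, c i • (fun j => (q i j : ℝ)))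
 :
    ∀ g : TropFn d, IsTropFcn g → ∃ f : TropFn n, IsTropFcn f ∧ f ∘ ι = g := by
  classical
  rintro g ⟨A, hA⟩
  choose U hU using exists_pairing_eq W q hqW hbasis
  refine ⟨fun p => (A.image fun t => (t.1, U t.2)).sup
    fun t => ((t.1 + ∑ i, (t.2 i : ℝ) * p i : ℝ) : Trop), ⟨_, fun p => rfl⟩, ?_⟩
  funext c
  rw [Function.comp_apply, hA, Finset.sup_image]
  refine Finset.sup_congr rfl fun t _ => ?_
  have key : ∑ j, (U t.2 j : ℝ) * ι c j = ∑ i, (t.2 i : ℝ) * c i := by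
    have hU' : ∀ i, ∑ j, (U t.2 j : ℝ) * (q i j : ℝ) = t.2 i := fun i => by
      exact_mod_cast hU t.2 i
    simp only [hι, Finset.sum_apply, Pi.smul_apply, smul_eq_mul, Finset.mul_sum]
    rw [Finset.sum_comm]
    refine Finset.sum_congr rfl fun i _ => ?_
    rw [← hU' i, Finset.sum_mul]
    exact Finset.sum_congr rfl fun j _ => by ring
  simp only [Function.comp_apply, key]
end
end

section
/- Let A and B be nonempty finite subsets of ℤ². Then f_A and f_B agree on the standard tropical line L (i.e., f_A(p) = f_B(p) for all p ∈ L) if and only if Δ(A) = Δ(B). In particular, f_A agrees with f_{Δ(A)} on L. -/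
/-!
Write `a`, `b`, `c` for the minimum of `x`, the minimum of `y` and the maximum of `x + y` over `A`.
On the three rays of `L`, at parameter `t ≥ 0`, the function `f_A` takes the values `-a t`, `-b t`
and `c t` (`fOf_ray`), so `f_A` restricted to `L` and the triple `(a, b, c)` determine each other
(take `t = 1`). Since some point of `A` satisfies all three inequalities, `a + b ≤ c`, and hence the
triangle `Δ(A)` contains its corners `(a, b)` and `(a, c - a)`. Therefore `Δ(A)` has the
same triple as `A` (`hasTriple_of_mem_iff`), which gives both claims.
-/

noncomputable section

/-- The standard tropical line `L ⊆ ℝ²`: the union of the three rays from the origin with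
directions `(-1,0)`, `(0,-1)` and `(1,1)`. -/
def stdLine : Set (Fin 2 → ℝ) :=
  {p | ∃ t : ℝ, 0 ≤ t ∧ (p = ![-t, 0] ∨ p = ![0, -t] ∨ p = ![t, t])}

/-- For a finite `A ⊆ ℤ²`, `fOf A` is the tropical Laurent polynomial function
`⊕_{u ∈ A} 0 ⊙ xᵘ`, i.e. `p ↦ max_{u ∈ A} u·p`. -/
def fOf (A : Finset (Fin 2 → ℤ)) : TropFn 2 :=
  fun p => A.sup fun u => (((u 0 : ℝ) * p 0 + (u 1 : ℝ) * p 1 : ℝ) : Trop)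

/-- For a nonempty finite `A ⊆ ℤ²` with `a = min x`, `b = min y`, `c = max (x+y)` over
`(x,y) ∈ A`, `deltaF A = {(x,y) ∈ ℤ² : x ≥ a, y ≥ b, x + y ≤ c}` (a finite set);
`deltaF ∅ = ∅`. -/
def deltaF (A : Finset (Fin 2 → ℤ)) : Finset (Fin 2 → ℤ) :=
  if h : A.Nonempty then
    letI a := (A.image fun u => u 0).min' (h.image _)
    letI b := (A.image fun u => u 1).min' (h.image _)
    letI c := (A.image fun u => u 0 + u 1).max' (h.image _)
    (Finset.Icc ![a, b] ![c - b, c - a]).filter fun v => v 0 + v 1 ≤ c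
  else ∅

/-- `HasTriple A a b c` says that `a = min x`, `b = min y` and `c = max (x + y)` over the points
`(x, y)` of `A`, all three being attained. -/
structure HasTriple (A : Finset (Fin 2 → ℤ)) (a b c : ℤ) : Prop where
  min_fst : IsLeast ((fun u : Fin 2 → ℤ => u 0) '' A) a
  min_snd : IsLeast ((fun u : Fin 2 → ℤ => u 1) '' A) b
  max_add : IsGreatest ((fun u : Fin 2 → ℤ => u 0 + u 1) '' A) c

lemma HasTriple.le {A : Finset (Fin 2 → ℤ)} {a b c : ℤ} (h : HasTriple A a b c) : a + b ≤ c := by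
  obtain ⟨u, hu, -⟩ := h.min_fst.1
  have h1 := h.min_fst.2 ⟨u, hu, rfl⟩
  have h2 := h.min_snd.2 ⟨u, hu, rfl⟩
  have h3 := h.max_add.2 ⟨u, hu, rfl⟩
  dsimp only at h1 h2 h3
  omega

lemma exists_hasTriple_mem_deltaF {A : Finset (Fin 2 → ℤ)} (hA : A.Nonempty) :
    ∃ a b c, HasTriple A a b c ∧ ∀ v, v ∈ deltaF A ↔ a ≤ v 0 ∧ b ≤ v 1 ∧ v 0 + v 1 ≤ c := by
  refine ⟨(A.image fun u => u 0).min' (hA.image _), (A.image fun u => u 1).min' (hA.image _),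
    (A.image fun u => u 0 + u 1).max' (hA.image _), ⟨?_, ?_, ?_⟩, fun v => ?_⟩
  · simpa only [Finset.coe_image] using Finset.isLeast_min' _ (hA.image fun u => u 0)
  · simpa only [Finset.coe_image] using Finset.isLeast_min' _ (hA.image fun u => u 1)
  · simpa only [Finset.coe_image] using Finset.isGreatest_max' _ (hA.image fun u => u 0 + u 1)
  · rw [deltaF, dif_pos hA]
    simp only [Finset.mem_filter, Finset.mem_Icc, Pi.le_def, Fin.forall_fin_two,
      Matrix.cons_val_zero, Matrix.cons_val_one]
    omega

/-- The bounds defining a nonempty triangle are attained at its corners `(a, b)` and `(a, c - a)`. -/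
lemma hasTriple_of_mem_iff {D : Finset (Fin 2 → ℤ)} {a b c : ℤ} (hle : a + b ≤ c)
    (hD : ∀ v, v ∈ D ↔ a ≤ v 0 ∧ b ≤ v 1 ∧ v 0 + v 1 ≤ c) : HasTriple D a b c := by
  refine ⟨⟨⟨![a, b], ?_, rfl⟩, ?_⟩, ⟨⟨![a, b], ?_, rfl⟩, ?_⟩, ⟨⟨![a, c - a], ?_, ?_⟩, ?_⟩⟩
  · simpa [hD] using hle
  · rintro _ ⟨u, hu, rfl⟩
    exact ((hD u).1 hu).1
  · simpa [hD] using hle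
  · rintro _ ⟨u, hu, rfl⟩
    exact ((hD u).1 hu).2.1
  · simp [hD]
    omega
  · simp
  · rintro _ ⟨u, hu, rfl⟩
    exact ((hD u).1 hu).2.2

lemma HasTriple.unique {A : Finset (Fin 2 → ℤ)} {a b c a' b' c' : ℤ} (h : HasTriple A a b c)
    (h' : HasTriple A a' b' c') : a = a' ∧ b = b' ∧ c = c' :=
  ⟨h.min_fst.unique h'.min_fst, h.min_snd.unique h'.min_snd, h.max_add.unique h'.max_add⟩

lemma fOf_eq_of_max {A : Finset (Fin 2 → ℤ)} {p : Fin 2 → ℝ} {r : ℝ}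
    (hle : ∀ u ∈ A, (u 0 : ℝ) * p 0 + (u 1 : ℝ) * p 1 ≤ r)
    (hex : ∃ u ∈ A, (u 0 : ℝ) * p 0 + (u 1 : ℝ) * p 1 = r) : fOf A p = (r : Trop) := by
  obtain ⟨w, hw, rfl⟩ := hex
  refine le_antisymm (Finset.sup_le fun u hu => WithBot.coe_le_coe.2 (hle u hu)) ?_
  exact Finset.le_sup (f := fun u : Fin 2 → ℤ =>
    (((u 0 : ℝ) * p 0 + (u 1 : ℝ) * p 1 : ℝ) : Trop)) hw

/-- The values of `f_A` on the three rays of the tropical line. -/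
lemma fOf_ray {A : Finset (Fin 2 → ℤ)} {a b c : ℤ} (h : HasTriple A a b c) {t : ℝ} (ht : 0 ≤ t) :
    fOf A ![-t, 0] = ((-(a * t) : ℝ) : Trop) ∧ fOf A ![0, -t] = ((-(b * t) : ℝ) : Trop) ∧
      fOf A ![t, t] = ((c * t : ℝ) : Trop) := by
  refine ⟨fOf_eq_of_max (fun u hu => ?_) ?_, fOf_eq_of_max (fun u hu => ?_) ?_,
    fOf_eq_of_max (fun u hu => ?_) ?_⟩
  · have h1 : (a : ℝ) ≤ u 0 := Int.cast_le.2 (h.min_fst.2 ⟨u, hu, rfl⟩)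
    simpa using mul_le_mul_of_nonneg_right h1 ht
  · obtain ⟨u, hu, rfl⟩ := h.min_fst.1
    exact ⟨u, hu, by simp⟩
  · have h1 : (b : ℝ) ≤ u 1 := Int.cast_le.2 (h.min_snd.2 ⟨u, hu, rfl⟩)
    simpa using mul_le_mul_of_nonneg_right h1 ht
  · obtain ⟨u, hu, rfl⟩ := h.min_snd.1
    exact ⟨u, hu, by simp⟩
  · have h1 : ((u 0 + u 1 : ℤ) : ℝ) ≤ c := Int.cast_le.2 (h.max_add.2 ⟨u, hu, rfl⟩)
    simpa [add_mul] using mul_le_mul_of_nonneg_right h1 ht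
  · obtain ⟨u, hu, rfl⟩ := h.max_add.1
    exact ⟨u, hu, by simp [add_mul]⟩

lemma fOf_eq_on_stdLine {A B : Finset (Fin 2 → ℤ)} {a b c : ℤ} (hA : HasTriple A a b c)
    (hB : HasTriple B a b c) : ∀ p ∈ stdLine, fOf A p = fOf B p := by
  rintro p ⟨t, ht, hp⟩
  obtain ⟨a1, a2, a3⟩ := fOf_ray hA ht
  obtain ⟨b1, b2, b3⟩ := fOf_ray hB ht
  rcases hp with rfl | rfl | rfl
  · rw [a1, b1]
  · rw [a2, b2]
  · rw [a3, b3]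

/-- The triple is read off from the values of `f_A` at `(-1, 0)`, `(0, -1)` and `(1, 1)`. -/
lemma triple_eq_of_fOf_eq {A B : Finset (Fin 2 → ℤ)} {a b c a' b' c' : ℤ}
    (hA : HasTriple A a b c) (hB : HasTriple B a' b' c')
    (h : ∀ p ∈ stdLine, fOf A p = fOf B p) : a = a' ∧ b = b' ∧ c = c' := by
  obtain ⟨a1, a2, a3⟩ := fOf_ray hA zero_le_one
  obtain ⟨b1, b2, b3⟩ := fOf_ray hB zero_le_one
  have h1 := h _ ⟨1, zero_le_one, Or.inl rfl⟩
  have h2 := h _ ⟨1, zero_le_one, Or.inr (Or.inl rfl)⟩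
  have h3 := h _ ⟨1, zero_le_one, Or.inr (Or.inr rfl)⟩
  rw [a1, b1, WithBot.coe_inj] at h1
  rw [a2, b2, WithBot.coe_inj] at h2
  rw [a3, b3, WithBot.coe_inj] at h3
  exact ⟨by simpa using h1, by simpa using h2, by simpa using h3⟩

/-- For nonempty finite `A, B ⊆ ℤ²`, the functions `f_A` and `f_B` agree
on the standard tropical line `L` iff `Δ(A) = Δ(B)`; in particular `f_A` agrees with
`f_{Δ(A)}` on `L`. -/
theorem stmt14 (A B : Finset (Fin 2 → ℤ)) (hA : A.Nonempty) (hB : B.Nonempty) :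
    ((∀ p ∈ stdLine, fOf A p = fOf B p) ↔ deltaF A = deltaF B) ∧
    (∀ p ∈ stdLine, fOf A p = fOf (deltaF A) p) := by
  obtain ⟨a, b, c, tA, mA⟩ := exists_hasTriple_mem_deltaF hA
  obtain ⟨a', b', c', tB, mB⟩ := exists_hasTriple_mem_deltaF hB
  have dA := hasTriple_of_mem_iff tA.le mA
  have dB := hasTriple_of_mem_iff tB.le mB
  refine ⟨⟨fun h => ?_, fun h => ?_⟩, fOf_eq_on_stdLine tA dA⟩
  · obtain ⟨rfl, rfl, rfl⟩ := triple_eq_of_fOf_eq tA tB h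
    ext v
    rw [mA, mB]
  · rw [h] at dA
    obtain ⟨rfl, rfl, rfl⟩ := dA.unique dB
    exact fOf_eq_on_stdLine tA tB
end
end

section
/- Let f ∈ 𝕋[x^±,y^±]_fcn with f ≠ −∞, and for i = 1,2,3 let mᵢ ∈ ℝ be the starting slope of f on the ray ρᵢ, i.e., the unique real number such that f(t dᵢ) = f(0) + mᵢ t for all sufficiently small t ≥ 0, where d₁ = (−1,0), d₂ = (0,−1), d₃ = (1,1). Then m₁ + m₂ + m₃ ≥ 0. -/
/-!
A monomial `c + u·p` of `f` that attains the maximum at the origin is an affine minorant of `f`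
touching `f` at `0`. Hence the starting slope of `f` on each ray is at least `u·d`, where `d` is
the direction of the ray (`dot_le_slope`). The three directions sum to zero, so
`m₁ + m₂ + m₃ ≥ u·(d₁ + d₂ + d₃) = 0`.
-/

noncomputable section

/-- An affine minorant of `f` touching `f` at the origin bounds each starting slope from below. -/
lemma dot_le_slope {n : ℕ} {f : TropFn n} {c : ℝ} {u : Fin n → ℤ} (h0 : f 0 = (c : Trop))
    (hle : ∀ p, ((c + ∑ i, (u i : ℝ) * p i : ℝ) : Trop) ≤ f p) {d : Fin n → ℝ} {m : ℝ}
    (h : ∃ ε > (0 : ℝ), ∀ t : ℝ, 0 ≤ t → t ≤ ε → f (t • d) = f 0 + ((m * t : ℝ) : Trop)) :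
    ∑ i, (u i : ℝ) * d i ≤ m := by
  obtain ⟨ε, hε, h⟩ := h
  have key := hle (ε • d)
  rw [h ε hε.le le_rfl, h0, ← WithBot.coe_add, WithBot.coe_le_coe] at key
  have hsum : ∑ i, (u i : ℝ) * (ε • d) i = (∑ i, (u i : ℝ) * d i) * ε := by
    rw [Finset.sum_mul]
    refine Finset.sum_congr rfl fun i _ => ?_
    simp only [Pi.smul_apply, smul_eq_mul]
    ring
  rw [hsum] at key
  exact le_of_mul_le_mul_right (by linarith) hε

/-- For a tropical Laurent polynomial function `f ≠ -∞` on `ℝ²` with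
starting slopes `m₁, m₂, m₃` on the rays with directions `(-1,0)`, `(0,-1)`, `(1,1)`,
one has `m₁ + m₂ + m₃ ≥ 0`. -/
theorem stmt15 (f : TropFn 2) (hf : IsTropFcn f) (hne : f ≠ fun _ => (⊥ : Trop))
    (m₁ m₂ m₃ : ℝ)
    (h₁ : ∃ ε > (0 : ℝ), ∀ t : ℝ, 0 ≤ t → t ≤ ε →
      f (t • ![(-1 : ℝ), 0]) = f 0 + ((m₁ * t : ℝ) : Trop))
    (h₂ : ∃ ε > (0 : ℝ), ∀ t : ℝ, 0 ≤ t → t ≤ ε →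
      f (t • ![(0 : ℝ), -1]) = f 0 + ((m₂ * t : ℝ) : Trop))
    (h₃ : ∃ ε > (0 : ℝ), ∀ t : ℝ, 0 ≤ t → t ≤ ε →
      f (t • ![(1 : ℝ), 1]) = f 0 + ((m₃ * t : ℝ) : Trop)) :
    0 ≤ m₁ + m₂ + m₃ := by
  obtain ⟨A, hA⟩ := hf
  have hAne : A.Nonempty := by
    rw [Finset.nonempty_iff_ne_empty]
    rintro rfl
    exact hne (funext fun p => by simp [hA])
  obtain ⟨⟨c, u⟩, hmem, hmax⟩ := Finset.exists_mem_eq_sup A hAne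
    fun t => ((t.1 + ∑ i, (t.2 i : ℝ) * (0 : Fin 2 → ℝ) i : ℝ) : Trop)
  have h0 : f 0 = (c : Trop) := by
    rw [hA, hmax]
    simp
  have hle : ∀ p, ((c + ∑ i, (u i : ℝ) * p i : ℝ) : Trop) ≤ f p := fun p => by
    rw [hA]
    exact Finset.le_sup (f := fun t : ℝ × (Fin 2 → ℤ) =>
      ((t.1 + ∑ i, (t.2 i : ℝ) * p i : ℝ) : Trop)) hmem
  have k₁ := dot_le_slope h0 hle h₁
  have k₂ := dot_le_slope h0 hle h₂
  have k₃ := dot_le_slope h0 hle h₃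
  simp [Fin.sum_univ_two] at k₁ k₂ k₃
  linarith
end
end

section
/- Let f ∈ 𝕋[x^±,y^±]_fcn. Then the following are equivalent: (1) there exists a tropical Laurent polynomial P of the standard form such that f and P̄ agree on the standard tropical line L; (2) f(0) = 0 and the starting slopes of f on the rays ρ₁ and ρ₂ are both 0. -/
/-!
On each of the three rays a tropical Laurent polynomial function is a maximum of finitely many
terms `c + s t` with `t ≥ 0`, where the integer slope `s` of the term `c ⊙ xᵘ` is `-u₀`, `-u₁`,
`u₀ + u₁` on `ρ₁`, `ρ₂`, `ρ₃` respectively.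

For (1) ⇒ (2): on `ρ₁` and `ρ₂` only the finitely many terms `a + (i + 1) t` with `a < 0` could
exceed `0`, and none of them does for small `t` (`exists_small`).

For (2) ⇒ (1): `f(0) = 0` forces all constants to be `≤ 0`. Zero starting slope on `ρ₁` and `ρ₂`
means that every term with constant `0` has nonpositive slope there (`slope_nonpos`), and that some
term with constant `0` has slope `0` there (`exists_zero_term`). The latter term on `ρ₁` satisfies
`u₀ = 0` and `u₁ ≥ 0`, so it makes `f ≥ 0` on `ρ₃` as well. Hence on each ray `f` is the maximum of
`0` and its terms of positive slope (`ray_eq`). Grouping those by slope gives the coefficients of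
the standard form: those read off from one ray contribute nothing positive on the other two, and
those from `ρ₁` and `ρ₂` are strictly negative.
-/

noncomputable section

/-- `f` is defined by a tropical Laurent polynomial of the standard form
`0 ⊕ ⊕_{i≥1} a_{-i} x^{-i} ⊕ ⊕_{j≥1} b_{-j} y^{-j} ⊕ ⊕_{k≥1} c_k x^k` with
`a_{-i} < 0`, `b_{-j} < 0`, `c_k ≤ 0` (values in `𝕋`, so `-∞` allowed) and all but
finitely many coefficients equal to `-∞` (here `a i`, `b j`, `c k` are the coefficients
of `x^{-(i+1)}`, `y^{-(j+1)}` and `x^{k+1}` respectively, truncated at some bound `m`). -/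
def IsStandardForm (f : TropFn 2) : Prop :=
  ∃ (m : ℕ) (a b c : ℕ → Trop),
    (∀ i, a i < 0) ∧ (∀ j, b j < 0) ∧ (∀ k, c k ≤ 0) ∧
    ∀ p : Fin 2 → ℝ,
      f p = (0 : Trop)
        ⊔ (Finset.range m).sup (fun i => a i + (((-((i : ℝ) + 1)) * p 0 : ℝ) : Trop))
        ⊔ (Finset.range m).sup (fun j => b j + (((-((j : ℝ) + 1)) * p 1 : ℝ) : Trop))
        ⊔ (Finset.range m).sup (fun k => c k + ((((k : ℝ) + 1) * p 0 : ℝ) : Trop))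

/-- The largest constant among the terms of `A` whose slope, as measured by `s`, is `k + 1`
(`-∞` if there is none). -/
def rayCoef (A : Finset (ℝ × (Fin 2 → ℤ))) (s : (Fin 2 → ℤ) → ℤ) (k : ℕ) : Trop :=
  (A.filter fun u => s u.2 = k + 1).sup fun u => (u.1 : Trop)

lemma rayCoef_cases (A : Finset (ℝ × (Fin 2 → ℤ))) (s : (Fin 2 → ℤ) → ℤ) (k : ℕ) :
    rayCoef A s k = ⊥ ∨ ∃ u ∈ A, s u.2 = k + 1 ∧ rayCoef A s k = (u.1 : Trop) := by
  rcases (A.filter fun u => s u.2 = k + 1).eq_empty_or_nonempty with h | h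
  · left
    simp [rayCoef, h]
  · right
    obtain ⟨u, hu, he⟩ := Finset.exists_mem_eq_sup _ h fun u => (u.1 : Trop)
    rw [Finset.mem_filter] at hu
    exact ⟨u, hu.1, hu.2, he⟩

lemma rayCoef_nonpos {A : Finset (ℝ × (Fin 2 → ℤ))} (hA : ∀ u ∈ A, u.1 ≤ 0)
    (s : (Fin 2 → ℤ) → ℤ) (k : ℕ) : rayCoef A s k ≤ 0 := by
  rcases rayCoef_cases A s k with h | ⟨u, hu, -, h⟩
  · simp [h]
  · rw [h]
    exact_mod_cast hA u hu

lemma rayCoef_neg {A : Finset (ℝ × (Fin 2 → ℤ))} (hA : ∀ u ∈ A, u.1 ≤ 0)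
    {s : (Fin 2 → ℤ) → ℤ} (hs : ∀ u ∈ A, u.1 = 0 → s u.2 ≤ 0) (k : ℕ) : rayCoef A s k < 0 := by
  rcases rayCoef_cases A s k with h | ⟨u, hu, hk, h⟩
  · rw [h]
    exact WithBot.bot_lt_coe (0 : ℝ)
  · rw [h]
    have : u.1 < 0 := lt_of_le_of_ne (hA u hu) fun h0 => by
      have := hs u hu h0
      omega
    exact_mod_cast this

/-- On a ray where `f` stays nonnegative, `f` is the maximum of `0` and its terms of positive
slope, the latter grouped by slope. -/
lemma ray_eq {A : Finset (ℝ × (Fin 2 → ℤ))} (hA : ∀ u ∈ A, u.1 ≤ 0)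
    {s : (Fin 2 → ℤ) → ℤ} {m : ℕ} (hm : ∀ u ∈ A, s u.2 ≤ m)
    (h0 : ∃ u ∈ A, u.1 = 0 ∧ 0 ≤ s u.2) {t : ℝ} (ht : 0 ≤ t) :
    (A.sup fun u => ((u.1 + (s u.2 : ℝ) * t : ℝ) : Trop)) =
      0 ⊔ (Finset.range m).sup fun k => rayCoef A s k + ((((k : ℝ) + 1) * t : ℝ) : Trop) := by
  apply le_antisymm
  · refine Finset.sup_le fun u hu => ?_
    rcases le_or_gt (s u.2) 0 with h | h
    · refine le_sup_of_le_left ?_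
      have h' : (s u.2 : ℝ) ≤ 0 := by exact_mod_cast h
      have : u.1 + (s u.2 : ℝ) * t ≤ 0 := by nlinarith [hA u hu]
      exact_mod_cast this
    · refine le_sup_of_le_right ?_
      obtain ⟨k, hk⟩ : ∃ k : ℕ, s u.2 = k + 1 := ⟨(s u.2 - 1).toNat, by omega⟩
      have hkm : k ∈ Finset.range m := by
        have := hm u hu
        rw [Finset.mem_range]
        omega
      refine le_trans ?_ (Finset.le_sup hkm)
      have hle : (u.1 : Trop) ≤ rayCoef A s k :=
        Finset.le_sup (f := fun u : ℝ × (Fin 2 → ℤ) => (u.1 : Trop))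
          (Finset.mem_filter.2 ⟨hu, hk⟩)
      rw [hk, WithBot.coe_add]
      push_cast
      gcongr
  · refine sup_le ?_ (Finset.sup_le fun k _ => ?_)
    · obtain ⟨u, hu, hc, hs⟩ := h0
      refine le_trans ?_ (Finset.le_sup hu)
      have hs' : (0 : ℝ) ≤ s u.2 := by exact_mod_cast hs
      have : 0 ≤ u.1 + (s u.2 : ℝ) * t := by
        rw [hc]
        positivity
      exact_mod_cast this
    · rcases rayCoef_cases A s k with h | ⟨u, hu, hk, h⟩
      · simp [h]
      · refine le_trans (le_of_eq ?_) (Finset.le_sup hu)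
        rw [h, hk, WithBot.coe_add]
        push_cast
        rfl

lemma slope_nonpos {A : Finset (ℝ × (Fin 2 → ℤ))} {s : (Fin 2 → ℤ) → ℤ} {ε : ℝ} (hε : 0 < ε)
    (h : (A.sup fun u => ((u.1 + (s u.2 : ℝ) * ε : ℝ) : Trop)) ≤ 0) :
    ∀ u ∈ A, u.1 = 0 → s u.2 ≤ 0 := by
  intro u hu hc
  have h1 : ((u.1 + (s u.2 : ℝ) * ε : ℝ) : Trop) ≤ 0 :=
    (Finset.le_sup (f := fun u : ℝ × (Fin 2 → ℤ) => ((u.1 + (s u.2 : ℝ) * ε : ℝ) : Trop))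
      hu).trans h
  have h2 : u.1 + (s u.2 : ℝ) * ε ≤ 0 := by exact_mod_cast h1
  rw [hc, zero_add] at h2
  have h3 : (s u.2 : ℝ) ≤ 0 := by
    by_contra! h3
    nlinarith
  exact_mod_cast h3

/-- If the maximum of affine terms vanishes on `[0, ε]`, some term vanishes identically: a term
attaining the maximum at the interior point `ε / 2` is `≤ 0` at both ends. -/
lemma exists_zero_term {A : Finset (ℝ × (Fin 2 → ℤ))} (hA : ∀ u ∈ A, u.1 ≤ 0)
    {s : (Fin 2 → ℤ) → ℤ} {ε : ℝ} (hε : 0 < ε)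
    (h : ∀ t : ℝ, 0 ≤ t → t ≤ ε → (A.sup fun u => ((u.1 + (s u.2 : ℝ) * t : ℝ) : Trop)) = 0) :
    ∃ u ∈ A, u.1 = 0 ∧ s u.2 = 0 := by
  have hne : A.Nonempty := by
    rw [Finset.nonempty_iff_ne_empty]
    rintro rfl
    have := h 0 le_rfl hε.le
    rw [Finset.sup_empty] at this
    exact WithBot.bot_ne_coe this
  obtain ⟨u, hu, he⟩ := Finset.exists_mem_eq_sup A hne
    fun u => ((u.1 + (s u.2 : ℝ) * (ε / 2) : ℝ) : Trop)
  rw [h _ (by linarith) (by linarith)] at he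
  have h1 : 0 = u.1 + (s u.2 : ℝ) * (ε / 2) := by exact_mod_cast he
  have h2 : ((u.1 + (s u.2 : ℝ) * ε : ℝ) : Trop) ≤ 0 :=
    (Finset.le_sup (f := fun u : ℝ × (Fin 2 → ℤ) => ((u.1 + (s u.2 : ℝ) * ε : ℝ) : Trop))
      hu).trans (h ε hε.le le_rfl).le
  have h3 : u.1 + (s u.2 : ℝ) * ε ≤ 0 := by exact_mod_cast h2
  have h4 := hA u hu
  have h5 : u.1 = 0 := by linarith
  refine ⟨u, hu, h5, ?_⟩
  rw [h5, zero_add, eq_comm, mul_eq_zero] at h1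
  rcases h1 with h1 | h1
  · exact_mod_cast h1
  · linarith

lemma sup_nonpos {m : ℕ} {a : ℕ → Trop} (ha : ∀ i, a i ≤ 0) {r : ℕ → ℝ} (hr : ∀ i, r i ≤ 0) :
    ((Finset.range m).sup fun i => a i + (r i : Trop)) ≤ 0 :=
  Finset.sup_le fun i _ => add_nonpos (ha i) (by exact_mod_cast hr i)

lemma exists_small (m : ℕ) {a : ℕ → Trop} (ha : ∀ i, a i < 0) :
    ∃ ε > (0 : ℝ), ∀ t : ℝ, 0 ≤ t → t ≤ ε →
      ((Finset.range m).sup fun i => a i + ((((i : ℝ) + 1) * t : ℝ) : Trop)) ≤ 0 := by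
  induction m with
  | zero => exact ⟨1, one_pos, by simp⟩
  | succ m ih =>
    obtain ⟨ε, hε, h⟩ := ih
    obtain ⟨δ, hδ, h'⟩ : ∃ δ > (0 : ℝ), ∀ t : ℝ, 0 ≤ t → t ≤ δ →
        a m + ((((m : ℝ) + 1) * t : ℝ) : Trop) ≤ 0 := by
      have hm := ha m
      generalize a m = x at hm
      induction x using WithBot.recBotCoe with
      | bot => exact ⟨1, one_pos, by simp⟩
      | coe c =>
        have hc : c < 0 := by exact_mod_cast hm
        have hm1 : (0 : ℝ) < m + 1 := by positivity
        refine ⟨-c / (m + 1), div_pos (by linarith) hm1, fun t _ ht => ?_⟩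
        rw [le_div_iff₀ hm1] at ht
        have : c + ((m : ℝ) + 1) * t ≤ 0 := by linarith
        exact_mod_cast this
    refine ⟨min ε δ, lt_min hε hδ, fun t h0 ht => ?_⟩
    rw [Finset.range_add_one, Finset.sup_insert]
    exact sup_le (h' t h0 (ht.trans (min_le_right _ _))) (h t h0 (ht.trans (min_le_left _ _)))

/-- For a tropical Laurent polynomial function `f` on `ℝ²`, the following
are equivalent: (1) `f` agrees on the standard tropical line `L` with a function defined by
a tropical Laurent polynomial of the standard form; (2) `f(0) = 0` and the starting slopes
of `f` on the rays `ρ₁` and `ρ₂` are both `0`. -/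
theorem stmt16 (f : TropFn 2) (hf : IsTropFcn f) :
    (∃ g : TropFn 2, IsStandardForm g ∧ ∀ p ∈ stdLine, f p = g p) ↔
      (f 0 = (0 : Trop) ∧
        (∃ ε > (0 : ℝ), ∀ t : ℝ, 0 ≤ t → t ≤ ε → f (t • ![(-1 : ℝ), 0]) = f 0) ∧
        (∃ ε > (0 : ℝ), ∀ t : ℝ, 0 ≤ t → t ≤ ε → f (t • ![(0 : ℝ), -1]) = f 0)) := by
  constructor
  · rintro ⟨g, ⟨m, a, b, c, ha, hb, hc, hg⟩, hfg⟩
    have hf0 : f 0 = 0 := by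
      rw [hfg 0 ⟨0, le_rfl, Or.inl (by ext i; fin_cases i <;> simp)⟩, hg]
      refine le_antisymm (sup_le (sup_le (sup_le le_rfl ?_) ?_) ?_)
        (le_sup_of_le_left (le_sup_of_le_left le_sup_left))
      · exact sup_nonpos (fun i => (ha i).le) fun i => by simp
      · exact sup_nonpos (fun i => (hb i).le) fun i => by simp
      · exact sup_nonpos hc fun i => by simp
    refine ⟨hf0, ?_, ?_⟩
    · obtain ⟨ε, hε, h⟩ := exists_small m ha
      refine ⟨ε, hε, fun t h0 ht => ?_⟩
      rw [hf0, hfg _ ⟨t, h0, Or.inl (by ext i; fin_cases i <;> simp)⟩, hg]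
      refine le_antisymm (sup_le (sup_le (sup_le le_rfl ?_) ?_) ?_)
        (le_sup_of_le_left (le_sup_of_le_left le_sup_left))
      · convert h t h0 ht using 5
        simp
        ring
      · exact sup_nonpos (fun i => (hb i).le) fun i => by simp
      · refine sup_nonpos hc fun i => ?_
        have : (0 : ℝ) ≤ ((i : ℝ) + 1) * t := by positivity
        simpa using this
    · obtain ⟨ε, hε, h⟩ := exists_small m hb
      refine ⟨ε, hε, fun t h0 ht => ?_⟩
      rw [hf0, hfg _ ⟨t, h0, Or.inr (Or.inl (by ext i; fin_cases i <;> simp))⟩, hg]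
      refine le_antisymm (sup_le (sup_le (sup_le le_rfl ?_) ?_) ?_)
        (le_sup_of_le_left (le_sup_of_le_left le_sup_left))
      · exact sup_nonpos (fun i => (ha i).le) fun i => by simp
      · convert h t h0 ht using 5
        simp
        ring
      · exact sup_nonpos hc fun i => by simp
  · rintro ⟨hf0, ⟨ε₁, hε₁, h₁⟩, ⟨ε₂, hε₂, h₂⟩⟩
    obtain ⟨A, hA⟩ := hf
    -- The slopes of the term with exponent `u` along the three rays.
    let s₁ : (Fin 2 → ℤ) → ℤ := fun u => -u 0
    let s₂ : (Fin 2 → ℤ) → ℤ := fun u => -u 1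
    let s₃ : (Fin 2 → ℤ) → ℤ := fun u => u 0 + u 1
    have hr₁ : ∀ t : ℝ, f ![-t, 0] = A.sup fun u => ((u.1 + (s₁ u.2 : ℝ) * t : ℝ) : Trop) := by
      intro t
      rw [hA]
      refine Finset.sup_congr rfl fun u _ => ?_
      simp [s₁, Fin.sum_univ_two]
    have hr₂ : ∀ t : ℝ, f ![0, -t] = A.sup fun u => ((u.1 + (s₂ u.2 : ℝ) * t : ℝ) : Trop) := by
      intro t
      rw [hA]
      refine Finset.sup_congr rfl fun u _ => ?_
      simp [s₂, Fin.sum_univ_two]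
    have hr₃ : ∀ t : ℝ, f ![t, t] = A.sup fun u => ((u.1 + (s₃ u.2 : ℝ) * t : ℝ) : Trop) := by
      intro t
      rw [hA]
      refine Finset.sup_congr rfl fun u _ => ?_
      simp [s₃, Fin.sum_univ_two, add_mul]
    have hc : ∀ u ∈ A, u.1 ≤ 0 := by
      intro u hu
      have h := hA 0
      rw [hf0] at h
      have h' : ((u.1 + ∑ i, (u.2 i : ℝ) * (0 : Fin 2 → ℝ) i : ℝ) : Trop) ≤ 0 := by
        rw [h]
        exact Finset.le_sup (f := fun t : ℝ × (Fin 2 → ℤ) =>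
          ((t.1 + ∑ i, (t.2 i : ℝ) * (0 : Fin 2 → ℝ) i : ℝ) : Trop)) hu
      have h'' : u.1 + ∑ i, (u.2 i : ℝ) * (0 : Fin 2 → ℝ) i ≤ 0 := by exact_mod_cast h'
      simpa using h''
    have hz₁ : ∀ t : ℝ, 0 ≤ t → t ≤ ε₁ →
        (A.sup fun u => ((u.1 + (s₁ u.2 : ℝ) * t : ℝ) : Trop)) = 0 := by
      intro t h0 ht
      rw [← hr₁, ← hf0, ← h₁ t h0 ht]
      simp
    have hz₂ : ∀ t : ℝ, 0 ≤ t → t ≤ ε₂ →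
        (A.sup fun u => ((u.1 + (s₂ u.2 : ℝ) * t : ℝ) : Trop)) = 0 := by
      intro t h0 ht
      rw [← hr₂, ← hf0, ← h₂ t h0 ht]
      simp
    have hn₁ := slope_nonpos hε₁ (hz₁ ε₁ hε₁.le le_rfl).le
    have hn₂ := slope_nonpos hε₂ (hz₂ ε₂ hε₂.le le_rfl).le
    obtain ⟨v, hv, hv0, hvs⟩ := exists_zero_term hc hε₁ hz₁
    obtain ⟨w, hw, hw0, hws⟩ := exists_zero_term hc hε₂ hz₂
    have hvs₃ : 0 ≤ s₃ v.2 := by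
      have := hn₂ v hv hv0
      simp only [s₁, s₂, s₃] at *
      omega
    obtain ⟨m, hm⟩ : ∃ m : ℕ, ∀ u ∈ A, s₁ u.2 ≤ m ∧ s₂ u.2 ≤ m ∧ s₃ u.2 ≤ m := by
      refine ⟨A.sup fun u => (u.2 0).natAbs + (u.2 1).natAbs, fun u hu => ?_⟩
      have := Finset.le_sup (f := fun u : ℝ × (Fin 2 → ℤ) =>
        (u.2 0).natAbs + (u.2 1).natAbs) hu
      simp only [s₁, s₂, s₃] at *
      omega
    have ha := rayCoef_neg hc hn₁
    have hb := rayCoef_neg hc hn₂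
    have hcc := rayCoef_nonpos hc s₃
    refine ⟨_, ⟨m, rayCoef A s₁, rayCoef A s₂, rayCoef A s₃, ha, hb, hcc, fun p => rfl⟩, ?_⟩
    rintro p ⟨t, ht, rfl | rfl | rfl⟩
    · rw [hr₁, ray_eq hc (fun u hu => (hm u hu).1) ⟨v, hv, hv0, hvs.ge⟩ ht]
      have e₂ := sup_nonpos (m := m) (fun j => (hb j).le)
        (r := fun j => -((j : ℝ) + 1) * (![-t, 0] : Fin 2 → ℝ) 1) (fun j => by simp)
      have e₃ := sup_nonpos (m := m) hcc
        (r := fun k => ((k : ℝ) + 1) * (![-t, 0] : Fin 2 → ℝ) 0) (fun k => by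
          have : (0 : ℝ) ≤ ((k : ℝ) + 1) * t := by positivity
          simpa using this)
      rw [sup_assoc, sup_eq_left.2 ((sup_le e₂ e₃).trans (le_sup_left))]
      congr! 5
      simp
      ring
    · rw [hr₂, ray_eq hc (fun u hu => (hm u hu).2.1) ⟨w, hw, hw0, hws.ge⟩ ht]
      have e₁ := sup_nonpos (m := m) (fun j => (ha j).le)
        (r := fun j => -((j : ℝ) + 1) * (![0, -t] : Fin 2 → ℝ) 0) (fun j => by simp)
      have e₃ := sup_nonpos (m := m) hcc
        (r := fun k => ((k : ℝ) + 1) * (![0, -t] : Fin 2 → ℝ) 0) (fun k => by simp)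
      rw [sup_eq_left.2 e₁, sup_eq_left.2 (e₃.trans le_sup_left)]
      congr! 5
      simp
      ring
    · rw [hr₃, ray_eq hc (fun u hu => (hm u hu).2.2) ⟨v, hv, hv0, hvs₃⟩ ht]
      have e₁ := sup_nonpos (m := m) (fun j => (ha j).le)
        (r := fun j => -((j : ℝ) + 1) * (![t, t] : Fin 2 → ℝ) 0) (fun j => by
          have : (0 : ℝ) ≤ ((j : ℝ) + 1) * t := by positivity
          simp only [Matrix.cons_val_zero]
          linarith)
      have e₂ := sup_nonpos (m := m) (fun j => (hb j).le)
        (r := fun j => -((j : ℝ) + 1) * (![t, t] : Fin 2 → ℝ) 1) (fun j => by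
          have : (0 : ℝ) ≤ ((j : ℝ) + 1) * t := by positivity
          simp only [Matrix.cons_val_one, Matrix.cons_val_fin_one]
          linarith)
      rw [sup_eq_left.2 e₁, sup_eq_left.2 e₂]
      rfl
end
end
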